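/- arXiv:1009.4351 — 4 statements merged into one kernel-verified Lean document; each statement's English description precedes it below -/
import Mathlib

section
/- Let A ∈ GL_n(ℝ) be expansive, B = Aᵗ, Γ a full-rank lattice in ℝⁿ with dual lattice Γ*, and φ ∈ L²(ℝⁿ). Suppose there is a set M ⊂ ℝⁿ with ∪_{l∈ℤ} B^l(M) = ℝⁿ such that C₂ := (1/d(Γ)) · sup_{ξ∈M} ∑_{j∈ℤ} ∑_{γ∈Γ*} |\hat{φ}(B^j ξ) \hat{φ}(B^j ξ + γ)| < ∞. Then the wavelet system {D_{A^j} T_γ φ : j ∈ ℤ, γ ∈ Γ} is a Bessel sequence in L²(ℝⁿ) with Bessel bound C₂. -/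
open MeasureTheory Complex Set
open scoped ENNReal Topology ComplexConjugate Classical

noncomputable section

abbrev ℝn (n : ℕ) := Fin n → ℝ

/-- The Fourier transform `f̂(ξ) = ∫ f(x) e^{-2πi⟨ξ,x⟩} dx` (pointwise integral). -/
def ftrans {n : ℕ} (f : ℝn n → ℂ) (ξ : ℝn n) : ℂ :=
  ∫ x : ℝn n, Complex.exp (-(2 * Real.pi * (∑ i, ξ i * x i)) * Complex.I) * f x

/-- `fhat` is the (L²-) Fourier transform of `f`, characterized by the multiplication
formula against Schwartz functions. -/
def IsFourierPair {n : ℕ} (fhat f : ℝn n → ℂ) : Prop :=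
  ∀ g : SchwartzMap (ℝn n) ℂ,
    ∫ ξ : ℝn n, fhat ξ * g ξ = ∫ x : ℝn n, f x * ftrans (fun y => g y) x

/-- Dilation operator `D_M f(x) = |det M|^{1/2} f(Mx)`. -/
def dila {n : ℕ} (M : Matrix (Fin n) (Fin n) ℝ) (f : ℝn n → ℂ) : ℝn n → ℂ :=
  fun x => (Real.sqrt |M.det| : ℂ) * f (M.mulVec x)

/-- Translation operator `T_y f(x) = f(x - y)`. -/
def tran {n : ℕ} (y : ℝn n) (f : ℝn n → ℂ) : ℝn n → ℂ :=
  fun x => f (x - y)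

/-- Inner product `⟨f, g⟩ = ∫ f ⬝ conj g` of two functions. -/
def ip {n : ℕ} (f g : ℝn n → ℂ) : ℂ := ∫ x : ℝn n, f x * conj (g x)

/-- The element of L² determined by a square-integrable function (junk value `0` otherwise). -/
def toL2 {n : ℕ} (f : ℝn n → ℂ) : Lp ℂ 2 (volume : Measure (ℝn n)) :=
  if h : MemLp f 2 volume then h.toLp f else 0

/-- `F` is a Bessel family with bound `C`. -/
def IsBesselWith {n : ℕ} {ι : Type*} (F : ι → ℝn n → ℂ) (C : ℝ) : Prop :=
  ∀ f : ℝn n → ℂ, MemLp f 2 volume →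
    ∑' i, ((‖ip f (F i)‖₊ : ℝ≥0∞)) ^ 2 ≤ ENNReal.ofReal C * ∫⁻ x, (‖f x‖₊ : ℝ≥0∞) ^ 2

/-- `F` is a frame with bounds `C₁, C₂`. -/
def IsFrameWith {n : ℕ} {ι : Type*} (F : ι → ℝn n → ℂ) (C₁ C₂ : ℝ) : Prop :=
  ∀ f : ℝn n → ℂ, MemLp f 2 volume →
    ENNReal.ofReal C₁ * (∫⁻ x, (‖f x‖₊ : ℝ≥0∞) ^ 2) ≤ ∑' i, ((‖ip f (F i)‖₊ : ℝ≥0∞)) ^ 2 ∧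
    ∑' i, ((‖ip f (F i)‖₊ : ℝ≥0∞)) ^ 2 ≤ ENNReal.ofReal C₂ * ∫⁻ x, (‖f x‖₊ : ℝ≥0∞) ^ 2

/-- Reconstruction property: `f = ∑ᵢ ⟨f, G i⟩ F i` for every `f ∈ L²`. -/
def ReconstructionProp {n : ℕ} {ι : Type*} (F G : ι → ℝn n → ℂ) : Prop :=
  ∀ f : ℝn n → ℂ, MemLp f 2 volume →
    HasSum (fun i => ip f (G i) • toL2 (F i)) (toL2 f)

/-- Two families are dual frames: both are Bessel and the reconstruction formula holds. -/
def AreDualFrames {n : ℕ} {ι : Type*} (F G : ι → ℝn n → ℂ) : Prop :=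
  (∃ C, IsBesselWith F C) ∧ (∃ C, IsBesselWith G C) ∧ ReconstructionProp F G

/-- A real matrix is expansive if all its (complex) eigenvalues have modulus `> 1`. -/
def IsExpansive {n : ℕ} (M : Matrix (Fin n) (Fin n) ℝ) : Prop :=
  ∀ μ : ℂ, (M.map Complex.ofReal).charpoly.IsRoot μ → 1 < ‖μ‖

/-- Integer vector viewed in `ℝⁿ`. -/
def ivec {n : ℕ} (k : Fin n → ℤ) : ℝn n := fun i => (k i : ℝ)

/-- Image of a set under (the linear map given by) a matrix. -/
def mimg {n : ℕ} (M : Matrix (Fin n) (Fin n) ℝ) (S : Set (ℝn n)) : Set (ℝn n) :=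
  (fun x => M.mulVec x) '' S

/-- The wavelet system `{D_{A^j} T_{Pk} ψ}_{j ∈ ℤ, k ∈ ℤⁿ}` with translation lattice `Pℤⁿ`. -/
def waveletSystem {n : ℕ} (A P : Matrix (Fin n) (Fin n) ℝ) (ψ : ℝn n → ℂ) :
    ℤ × (Fin n → ℤ) → ℝn n → ℂ :=
  fun p => dila (A ^ p.1) (tran (P.mulVec (ivec p.2)) ψ)

/-- `E` is a multiplicative tiling set for `{B^j}`. -/
def IsMultTiling {n : ℕ} (B : Matrix (Fin n) (Fin n) ℝ) (E : Set (ℝn n)) : Prop :=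
  0 < volume E ∧ volume (Set.univ \ ⋃ j : ℤ, mimg (B ^ j) E) = 0 ∧
    ∀ j l : ℤ, j ≠ l → volume (mimg (B ^ j) E ∩ mimg (B ^ l) E) = 0

/-- A bounded multiplicative tiling set. -/
def IsBoundedMultTiling {n : ℕ} (B : Matrix (Fin n) (Fin n) ℝ) (E : Set (ℝn n)) : Prop :=
  IsMultTiling B E ∧ Bornology.IsBounded E ∧ (0 : ℝn n) ∉ closure E

/-!
Dilations and translations are unitary, so a single scale of the wavelet system reduces to the
integer translates of a function `φ`. By Plancherel, `⟨f, T_k φ⟩` is up to conjugation the `k`-th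
Fourier coefficient of the `ℤⁿ`-periodization of `conj F * Φ`, where `F` and `Φ` are the `L²`
Fourier transforms of `f` and `φ`. Parseval's identity on the unit cube, Cauchy–Schwarz in the sum
over the lattice, and unfolding the cube back to `ℝⁿ` then give
`∑ₖ |⟨f, T_k φ⟩|² ≤ ∫ |F(ξ)|² ∑ₘ |Φ(ξ) Φ(ξ + m)| dξ`.
Summed over all scales, the factor multiplying `|F(ξ)|²` becomes invariant under `ξ ↦ Aᵀ ξ`, so a
bound for it on `M` is a bound on all orbits of points of `M`, that is, everywhere.
-/

lemma iteratedDeriv_exp_ofReal_mul_I (m : ℕ) :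
    iteratedDeriv m (fun t : ℝ ↦ Complex.exp (t * Complex.I)) =
      fun t : ℝ ↦ Complex.I ^ m * Complex.exp (t * Complex.I) := by
  induction m with
  | zero => simp
  | succ m ih =>
    ext t
    have hderiv : HasDerivAt (fun t : ℝ ↦ Complex.exp (t * Complex.I))
        (Complex.exp (t * Complex.I) * (1 * Complex.I)) t :=
      ((Complex.ofRealCLM.hasDerivAt (x := t)).mul_const Complex.I).cexp
    rw [iteratedDeriv_succ, ih, (hderiv.const_mul (Complex.I ^ m)).deriv]
    ring

lemma hasTemperateGrowth_exp_ofReal_mul_I :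
    Function.HasTemperateGrowth fun t : ℝ ↦ Complex.exp (t * Complex.I) := by
  refine ⟨(Complex.ofRealCLM.contDiff.mul contDiff_const).cexp, fun m ↦ ⟨0, 1, fun t ↦ ?_⟩⟩
  rw [norm_iteratedFDeriv_eq_norm_iteratedDeriv, iteratedDeriv_exp_ofReal_mul_I]
  simp [Complex.norm_exp_ofReal_mul_I]

section FourierKernel

variable {n : ℕ}

/-- The kernel `e^{-2πi⟨ξ,x⟩}` of the Fourier transform, so that
`ftrans f ξ = ∫ x, fourierKernel ξ x * f x` holds definitionally. -/
def fourierKernel (ξ x : ℝn n) : ℂ :=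
  Complex.exp (-(2 * Real.pi * (∑ i, ξ i * x i)) * Complex.I)

lemma fourierKernel_eq_exp_ofReal (ξ x : ℝn n) :
    fourierKernel ξ x = Complex.exp ((-(2 * Real.pi * (ξ ⬝ᵥ x)) : ℝ) * Complex.I) := by
  simp [fourierKernel, dotProduct]

lemma norm_fourierKernel (ξ x : ℝn n) : ‖fourierKernel ξ x‖ = 1 := by
  rw [fourierKernel_eq_exp_ofReal, Complex.norm_exp_ofReal_mul_I]

lemma continuous_fourierKernel (ξ : ℝn n) : Continuous (fourierKernel ξ) := by
  unfold fourierKernel; fun_prop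

lemma fourierKernel_comm (ξ x : ℝn n) : fourierKernel ξ x = fourierKernel x ξ := by
  simp only [fourierKernel_eq_exp_ofReal, dotProduct_comm]

lemma fourierKernel_add_right (ξ x y : ℝn n) :
    fourierKernel ξ (x + y) = fourierKernel ξ x * fourierKernel ξ y := by
  simp only [fourierKernel_eq_exp_ofReal, ← Complex.exp_add, dotProduct_add]
  congr 1
  push_cast
  ring

lemma fourierKernel_mulVec (N : Matrix (Fin n) (Fin n) ℝ) (ξ x : ℝn n) :
    fourierKernel (N.mulVec ξ) x = fourierKernel ξ (N.transpose.mulVec x) := by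
  rw [fourierKernel_eq_exp_ofReal, fourierKernel_eq_exp_ofReal, Matrix.mulVec_transpose,
    dotProduct_comm, Matrix.dotProduct_mulVec, dotProduct_comm]

lemma fourierKernel_ivec_ivec (k m : Fin n → ℤ) : fourierKernel (ivec k) (ivec m) = 1 := by
  rw [fourierKernel_eq_exp_ofReal, Complex.exp_eq_one_iff]
  refine ⟨-(k ⬝ᵥ m), ?_⟩
  simp only [dotProduct, ivec]
  push_cast
  ring

lemma fourierKernel_add_ivec (k m : Fin n → ℤ) (x : ℝn n) :
    fourierKernel (ivec k) (x + ivec m) = fourierKernel (ivec k) x := by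
  rw [fourierKernel_add_right, fourierKernel_ivec_ivec, mul_one]

lemma hasTemperateGrowth_fourierKernel (ξ : ℝn n) :
    Function.HasTemperateGrowth (fourierKernel ξ) := by
  let L : ℝn n →L[ℝ] ℝ := -(2 * Real.pi) • ∑ i, ξ i • ContinuousLinearMap.proj i
  have hL : fourierKernel ξ = (fun t : ℝ ↦ Complex.exp (t * Complex.I)) ∘ L := by
    ext x
    simp [fourierKernel, L]
  rw [hL]
  exact hasTemperateGrowth_exp_ofReal_mul_I.comp L.hasTemperateGrowth

end FourierKernel

lemma sq_tsum_le_tsum_mul_tsum_of_sq_le_mul {ι : Type*} {r f g : ι → ℝ≥0∞}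
    (h : ∀ i, r i ^ 2 ≤ f i * g i) : (∑' i, r i) ^ 2 ≤ (∑' i, f i) * ∑' i, g i := by
  have sq_rpow_half (t : ℝ≥0∞) : (t ^ (2⁻¹ : ℝ)) ^ (2 : ℝ) = t := by
    rw [← ENNReal.rpow_mul]; norm_num
  have le_of_sq {a b c : ℝ≥0∞} (habc : a ^ 2 ≤ b * c) : a ≤ b ^ (2⁻¹ : ℝ) * c ^ (2⁻¹ : ℝ) := by
    rw [← ENNReal.mul_rpow_of_nonneg _ _ (by norm_num), ENNReal.le_rpow_inv_iff two_pos]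
    exact_mod_cast habc
  have sum_le (s : Finset ι) :
      ∑ i ∈ s, r i ≤ (∑' i, f i) ^ (2⁻¹ : ℝ) * (∑' i, g i) ^ (2⁻¹ : ℝ) := by
    calc ∑ i ∈ s, r i ≤ ∑ i ∈ s, f i ^ (2⁻¹ : ℝ) * g i ^ (2⁻¹ : ℝ) :=
          Finset.sum_le_sum fun i _ ↦ le_of_sq (h i)
      _ ≤ (∑ i ∈ s, f i) ^ (2⁻¹ : ℝ) * (∑ i ∈ s, g i) ^ (2⁻¹ : ℝ) := by
          simpa only [sq_rpow_half, one_div] using ENNReal.inner_le_Lp_mul_Lq s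
            (fun i ↦ f i ^ (2⁻¹ : ℝ)) (fun i ↦ g i ^ (2⁻¹ : ℝ)) Real.HolderConjugate.two_two
      _ ≤ _ := by gcongr <;> exact ENNReal.sum_le_tsum s
  have tsum_le := ENNReal.tsum_eq_iSup_sum (f := r) ▸ iSup_le sum_le
  rw [← ENNReal.mul_rpow_of_nonneg _ _ (by norm_num), ENNReal.le_rpow_inv_iff two_pos] at tsum_le
  exact_mod_cast tsum_le

section Periodization

variable {n : ℕ}

/-- The half-open unit cube `(0, 1]ⁿ`, a fundamental domain for `ℤⁿ`, written so that it is the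
codomain of `UnitAddTorus.measurableEquivPiIoc 0`. -/
def unitCube (n : ℕ) : Set (ℝn n) := {x | ∀ i, x i ∈ Ioc ((0 : ℝn n) i) ((0 : ℝn n) i + 1)}

lemma unitCube_eq_pi : unitCube n = univ.pi fun _ ↦ Ioc (0 : ℝ) 1 := by
  ext
  simp [unitCube]

lemma measurableSet_unitCube : MeasurableSet (unitCube n) :=
  unitCube_eq_pi ▸ MeasurableSet.univ_pi fun _ ↦ measurableSet_Ioc

/-- `ℤⁿ` as the lattice spanned by the standard basis of `ℝⁿ`, which is how `ZSpan` sees it. -/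
def intEquivZSpan (n : ℕ) :
    (Fin n → ℤ) ≃ (Submodule.span ℤ (range (Pi.basisFun ℝ (Fin n)))).toAddSubgroup :=
  ((Pi.basisFun ℝ (Fin n)).restrictScalars ℤ).equivFun.symm.toEquiv

lemma coe_intEquivZSpan (k : Fin n → ℤ) : (intEquivZSpan n k : ℝn n) = ivec k := by
  ext i
  simp [intEquivZSpan, ivec, Module.Basis.equivFun_symm_apply, Pi.single_apply]

lemma unitCube_ae_eq_fundamentalDomain :
    unitCube n =ᵐ[volume] ZSpan.fundamentalDomain (Pi.basisFun ℝ (Fin n)) := by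
  rw [ZSpan.fundamentalDomain_pi_basisFun, unitCube_eq_pi]
  exact Measure.univ_pi_Ioc_ae_eq_Icc.trans Measure.univ_pi_Ico_ae_eq_Icc.symm

lemma lintegral_eq_tsum_setLIntegral_unitCube (f : ℝn n → ℝ≥0∞) :
    ∫⁻ x, f x = ∑' k : Fin n → ℤ, ∫⁻ x in unitCube n, f (x + ivec k) := by
  have := (intEquivZSpan n).surjective.countable
  rw [(ZSpan.isAddFundamentalDomain' (Pi.basisFun ℝ (Fin n)) volume).lintegral_eq_tsum'' f,
    ← (intEquivZSpan n).tsum_eq, Measure.restrict_congr_set unitCube_ae_eq_fundamentalDomain]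
  simp only [AddSubgroup.vadd_def, coe_intEquivZSpan, vadd_eq_add, add_comm]

lemma integral_eq_tsum_setIntegral_unitCube {E : Type*} [NormedAddCommGroup E] [NormedSpace ℝ E]
    {f : ℝn n → E} (hf : Integrable f) :
    ∫ x, f x = ∑' k : Fin n → ℤ, ∫ x in unitCube n, f (x + ivec k) := by
  have := (intEquivZSpan n).surjective.countable
  rw [(ZSpan.isAddFundamentalDomain' (Pi.basisFun ℝ (Fin n)) volume).integral_eq_tsum'' f hf,
    ← (intEquivZSpan n).tsum_eq, Measure.restrict_congr_set unitCube_ae_eq_fundamentalDomain]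
  simp only [AddSubgroup.vadd_def, coe_intEquivZSpan, vadd_eq_add, add_comm]

end Periodization

lemma lintegral_sq_enorm_eq_sq_enorm_toLp {α E : Type*} [MeasurableSpace α] {μ : Measure α}
    [NormedAddCommGroup E] {f : α → E} (hf : MemLp f 2 μ) :
    ∫⁻ x, ‖f x‖ₑ ^ 2 ∂μ = ‖hf.toLp f‖ₑ ^ 2 := by
  have h := eLpNorm_nnreal_pow_eq_lintegral (f := f) (μ := μ) (p := 2) two_ne_zero
  simpa only [Lp.enorm_toLp, NNReal.coe_ofNat, ENNReal.coe_ofNat, ENNReal.rpow_ofNat] using h.symm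

section CubeBessel

variable {n : ℕ}

attribute [local instance] instMeasureSpaceUnitAddCircle

lemma mFourier_neg_coe (k : Fin n → ℤ) (x : ℝn n) :
    UnitAddTorus.mFourier (-k) (fun i ↦ (x i : UnitAddCircle)) = fourierKernel (ivec k) x := by
  simp only [UnitAddTorus.mFourier, ContinuousMap.coe_mk, Pi.neg_apply, fourier_coe_apply,
    ← Complex.exp_sum, fourierKernel, ivec]
  congr 1
  push_cast
  simp only [Finset.mul_sum, Finset.sum_mul, ← Finset.sum_neg_distrib]
  exact Finset.sum_congr rfl fun i _ ↦ by ring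

lemma tsum_sq_enorm_mFourierCoeff {d : Type*} [Fintype d] {f : UnitAddTorus d → ℂ}
    (hf : MemLp f 2 volume) :
    ∑' k, ‖UnitAddTorus.mFourierCoeff f k‖ₑ ^ 2 = ∫⁻ t, ‖f t‖ₑ ^ 2 := by
  have hcoeff (k : d → ℤ) :
      UnitAddTorus.mFourierBasis.repr (hf.toLp f) k = UnitAddTorus.mFourierCoeff f k := by
    rw [UnitAddTorus.mFourierBasis_repr]
    exact integral_congr_ae (hf.coeFn_toLp.mono fun t ht ↦ by simp only [ht])
  have hparseval := lp.hasSum_norm (p := 2) (by norm_num)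
    (UnitAddTorus.mFourierBasis.repr (hf.toLp f))
  simp only [hcoeff, ENNReal.toReal_ofNat, Real.rpow_ofNat, LinearIsometryEquiv.norm_map]
    at hparseval
  rw [lintegral_sq_enorm_eq_sq_enorm_toLp hf]
  simp only [← ofReal_norm, ← ENNReal.ofReal_pow (norm_nonneg _)]
  rw [← hparseval.tsum_eq, ENNReal.ofReal_tsum_of_nonneg (fun _ ↦ sq_nonneg _) hparseval.summable]

lemma measurableEmbedding_measurableEquivPiIoc_zero : MeasurableEmbedding
    fun t : UnitAddTorus (Fin n) ↦ (UnitAddTorus.measurableEquivPiIoc 0 t : ℝn n) :=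
  (MeasurableEmbedding.subtype_coe measurableSet_unitCube).comp
    (UnitAddTorus.measurableEquivPiIoc 0).measurableEmbedding

lemma measurePreserving_measurableEquivPiIoc_zero : MeasurePreserving
    (fun t : UnitAddTorus (Fin n) ↦ (UnitAddTorus.measurableEquivPiIoc 0 t : ℝn n))
    volume (volume.restrict (unitCube n)) :=
  (measurePreserving_subtype_coe measurableSet_unitCube).comp
    (UnitAddTorus.measurePreserving_equivPiIoc 0)

lemma tsum_sq_enorm_setIntegral_unitCube {f : ℝn n → ℂ}
    (hf : MemLp f 2 (volume.restrict (unitCube n))) :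
    ∑' k : Fin n → ℤ, ‖∫ x in unitCube n, fourierKernel (ivec k) x * f x‖ₑ ^ 2 =
      ∫⁻ x in unitCube n, ‖f x‖ₑ ^ 2 := by
  let e := UnitAddTorus.measurableEquivPiIoc (0 : Fin n → ℝ)
  have he := measurePreserving_measurableEquivPiIoc_zero (n := n)
  have hemb := measurableEmbedding_measurableEquivPiIoc_zero (n := n)
  have hcoeff (k : Fin n → ℤ) : UnitAddTorus.mFourierCoeff (fun t ↦ f (e t)) k =
      ∫ x in unitCube n, fourierKernel (ivec k) x * f x := by
    rw [← he.integral_comp hemb]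
    refine integral_congr_ae (.of_forall fun t ↦ ?_)
    simp only [smul_eq_mul, ← mFourier_neg_coe]
    exact congrArg (fun s ↦ UnitAddTorus.mFourier (-k) s * f (e t)) (e.symm_apply_apply t).symm
  simp only [← hcoeff]
  exact (tsum_sq_enorm_mFourierCoeff (hf.comp_measurePreserving he)).trans
    (he.lintegral_comp_emb hemb fun x ↦ ‖f x‖ₑ ^ 2)

end CubeBessel

section LatticeInequality

variable {n : ℕ}

lemma tsum_sq_enorm_integral_le_setLIntegral_unitCube {h : ℝn n → ℂ} (hh : Integrable h) :
    ∑' k : Fin n → ℤ, ‖∫ x, fourierKernel (ivec k) x * h x‖ₑ ^ 2 ≤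
      ∫⁻ x in unitCube n, (∑' m : Fin n → ℤ, ‖h (x + ivec m)‖ₑ) ^ 2 := by
  by_cases htop : ∫⁻ x in unitCube n, (∑' m : Fin n → ℤ, ‖h (x + ivec m)‖ₑ) ^ 2 = ⊤
  · exact htop ▸ le_top
  let H : ℝn n → ℂ := fun x ↦ ∑' m : Fin n → ℤ, h (x + ivec m)
  have aesm_shift (m : Fin n → ℤ) : AEStronglyMeasurable (fun x ↦ h (x + ivec m)) :=
    (hh.comp_add_right (ivec m)).aestronglyMeasurable
  have lintegral_H_le : ∫⁻ x in unitCube n, ‖H x‖ₑ ^ 2 ≤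
      ∫⁻ x in unitCube n, (∑' m : Fin n → ℤ, ‖h (x + ivec m)‖ₑ) ^ 2 :=
    lintegral_mono fun x ↦ pow_le_pow_left' enorm_tsum_le_tsum_enorm 2
  have memLp_H : MemLp H 2 (volume.restrict (unitCube n)) := by
    refine ⟨(AEStronglyMeasurable.tsum aesm_shift).restrict, ?_⟩
    rw [eLpNorm_lt_top_iff_lintegral_rpow_enorm_lt_top two_ne_zero ENNReal.ofNat_ne_top]
    simpa using lintegral_H_le.trans_lt (lt_top_iff_ne_top.mpr htop)
  refine (Eq.trans_le ?_ (tsum_sq_enorm_setIntegral_unitCube memLp_H).le).trans lintegral_H_le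
  refine tsum_congr fun k ↦ congrArg (‖·‖ₑ ^ 2) ?_
  have integrable_mul : Integrable fun x ↦ fourierKernel (ivec k) x * h x :=
    hh.bdd_mul (c := 1) (continuous_fourierKernel _).aestronglyMeasurable
      (.of_forall fun x ↦ (norm_fourierKernel _ x).le)
  rw [integral_eq_tsum_setIntegral_unitCube integrable_mul, ← integral_tsum]
  · simp only [fourierKernel_add_ivec, tsum_mul_left, H]
  · exact fun m ↦ (integrable_mul.comp_add_right (ivec m)).aestronglyMeasurable.restrict
  · rw [← lintegral_eq_tsum_setLIntegral_unitCube fun x ↦ ‖fourierKernel (ivec k) x * h x‖ₑ]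
    exact integrable_mul.2.ne

lemma tsum_enorm_mul_add_ivec (v : ℝn n → ℂ) (x : ℝn n) (l : Fin n → ℤ) :
    ∑' m : Fin n → ℤ, ‖v (x + ivec l) * v (x + ivec l + ivec m)‖ₑ =
      ‖v (x + ivec l)‖ₑ * ∑' m : Fin n → ℤ, ‖v (x + ivec m)‖ₑ := by
  simp only [enorm_mul, ENNReal.tsum_mul_left]
  rw [← (Equiv.addLeft l).tsum_eq fun m ↦ ‖v (x + ivec m)‖ₑ]
  have ivec_add (m : Fin n → ℤ) : ivec (l + m) = ivec l + ivec m := by ext; simp [ivec]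
  simp only [Equiv.coe_addLeft, ivec_add, add_assoc]

lemma tsum_sq_enorm_integral_mul_le {u v : ℝn n → ℂ} (hu : AEStronglyMeasurable u)
    (hv : AEStronglyMeasurable v) (huv : Integrable fun x ↦ u x * v x) :
    ∑' k : Fin n → ℤ, ‖∫ x, fourierKernel (ivec k) x * (u x * v x)‖ₑ ^ 2 ≤
      ∫⁻ x, ‖u x‖ₑ ^ 2 * ∑' m : Fin n → ℤ, ‖v x * v (x + ivec m)‖ₑ := by
  have aemeasurable_rhs : AEMeasurable fun x ↦
      ‖u x‖ₑ ^ 2 * ∑' m : Fin n → ℤ, ‖v x * v (x + ivec m)‖ₑ :=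
    (hu.enorm.pow_const 2).mul <| AEMeasurable.tsum fun m ↦
      (hv.mul (hv.comp_quasiMeasurePreserving
        (measurePreserving_add_right volume (ivec m)).quasiMeasurePreserving)).enorm
  calc _ ≤ ∫⁻ x in unitCube n, (∑' l : Fin n → ℤ, ‖u (x + ivec l) * v (x + ivec l)‖ₑ) ^ 2 :=
        tsum_sq_enorm_integral_le_setLIntegral_unitCube huv
    _ ≤ ∫⁻ x in unitCube n, ∑' l : Fin n → ℤ, ‖u (x + ivec l)‖ₑ ^ 2 *
          ∑' m : Fin n → ℤ, ‖v (x + ivec l) * v (x + ivec l + ivec m)‖ₑ := by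
        refine lintegral_mono fun x ↦ ?_
        simp only [tsum_enorm_mul_add_ivec, ← mul_assoc, ENNReal.tsum_mul_right]
        refine sq_tsum_le_tsum_mul_tsum_of_sq_le_mul fun l ↦ le_of_eq ?_
        rw [enorm_mul]
        ring
    _ = _ := by
        rw [lintegral_eq_tsum_setLIntegral_unitCube, ← lintegral_tsum]
        exact fun l ↦ (aemeasurable_rhs.comp_quasiMeasurePreserving
          (measurePreserving_add_right volume (ivec l)).quasiMeasurePreserving).restrict

end LatticeInequality

section LinearChangeOfVariables

variable {ι : Type*} [Fintype ι] [DecidableEq ι] {N : Matrix ι ι ℝ}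

/-- Multiplication by an invertible matrix as a continuous linear automorphism. -/
def mulVecEquiv (hN : IsUnit N.det) : (ι → ℝ) ≃L[ℝ] (ι → ℝ) :=
  (Matrix.toLin'OfInv (Matrix.nonsing_inv_mul N hN)
    (Matrix.mul_nonsing_inv N hN)).toContinuousLinearEquiv

lemma measurableEmbedding_mulVec (hN : IsUnit N.det) : MeasurableEmbedding N.mulVec :=
  (mulVecEquiv hN).toHomeomorph.measurableEmbedding

lemma map_mulVec_volume (hN : IsUnit N.det) :
    Measure.map N.mulVec volume = ENNReal.ofReal |N.det|⁻¹ • volume := by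
  rw [← abs_inv]
  exact Real.map_matrix_volume_pi_eq_smul_volume_pi hN.ne_zero

lemma quasiMeasurePreserving_mulVec (hN : IsUnit N.det) :
    Measure.QuasiMeasurePreserving N.mulVec volume volume :=
  ⟨(measurableEmbedding_mulVec hN).measurable,
    map_mulVec_volume hN ▸ Measure.smul_absolutelyContinuous⟩

lemma lintegral_comp_mulVec (hN : IsUnit N.det) (f : (ι → ℝ) → ℝ≥0∞) :
    ∫⁻ x, f (N.mulVec x) = ENNReal.ofReal |N.det|⁻¹ * ∫⁻ x, f x := by
  rw [← (measurableEmbedding_mulVec hN).lintegral_map, map_mulVec_volume hN,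
    lintegral_smul_measure, smul_eq_mul]

lemma integral_comp_mulVec {E : Type*} [NormedAddCommGroup E] [NormedSpace ℝ E]
    (hN : IsUnit N.det) (f : (ι → ℝ) → E) :
    ∫ x, f (N.mulVec x) = |N.det|⁻¹ • ∫ x, f x := by
  rw [← (measurableEmbedding_mulVec hN).integral_map, map_mulVec_volume hN,
    integral_smul_measure, ENNReal.toReal_ofReal (by positivity)]

lemma memLp_comp_mulVec {E : Type*} [NormedAddCommGroup E] {p : ℝ≥0∞} (hN : IsUnit N.det)
    {f : (ι → ℝ) → E} (hf : MemLp f p volume) : MemLp (fun x ↦ f (N.mulVec x)) p volume := by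
  refine MemLp.comp_of_map (f := N.mulVec) ?_
    (measurableEmbedding_mulVec hN).measurable.aemeasurable
  exact map_mulVec_volume hN ▸ hf.smul_measure ENNReal.ofReal_ne_top

end LinearChangeOfVariables

lemma ip_eq_inner {n : ℕ} {f g : ℝn n → ℂ} (hf : MemLp f 2 volume) (hg : MemLp g 2 volume) :
    ip f g = inner ℂ (hg.toLp g) (hf.toLp f) := by
  rw [L2.inner_def]
  refine integral_congr_ae ?_
  filter_upwards [hf.coeFn_toLp, hg.coeFn_toLp] with x hfx hgx
  rw [hfx, hgx, RCLike.inner_apply]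

section L2Fourier

open scoped FourierTransform SchwartzMap

variable {n : ℕ}

/-- The `L²` Fourier transform on `ℝⁿ`, transported from `EuclideanSpace`, on which Mathlib
defines it: `ℝn n` carries the sup norm and no inner product. -/
def l2Fourier (n : ℕ) :
    Lp ℂ 2 (volume : Measure (ℝn n)) →ₗᵢ[ℂ] Lp ℂ 2 (volume : Measure (ℝn n)) :=
  (Lp.compMeasurePreservingₗᵢ ℂ _ (PiLp.volume_preserving_toLp (Fin n))).comp <|
    (Lp.fourierTransformₗᵢ (EuclideanSpace ℝ (Fin n)) ℂ).toLinearIsometry.comp <|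
      Lp.compMeasurePreservingₗᵢ ℂ _ (PiLp.volume_preserving_ofLp (Fin n))

lemma ftrans_schwartzMap (g : 𝓢(ℝn n, ℂ)) (x : ℝn n) :
    ftrans g x = 𝓕 (SchwartzMap.compCLMOfContinuousLinearEquiv ℂ
      (EuclideanSpace.equiv (Fin n) ℝ) g) (WithLp.toLp 2 x) := by
  rw [SchwartzMap.fourier_coe, Real.fourier_eq',
    ← (PiLp.volume_preserving_toLp (Fin n)).integral_comp
      (MeasurableEquiv.toLp 2 (Fin n → ℝ)).measurableEmbedding]
  refine integral_congr_ae (.of_forall fun y ↦ ?_)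
  simp only [ofReal_sum, ofReal_mul, neg_mul, PiLp.inner_apply, RCLike.inner_apply,
    Real.ringHom_apply, ofReal_neg, ofReal_ofNat]
  rfl

lemma isFourierPair_l2Fourier (f : Lp ℂ 2 (volume : Measure (ℝn n))) :
    IsFourierPair (l2Fourier n f) f := by
  intro g
  have toLp_emb := (MeasurableEquiv.toLp 2 (Fin n → ℝ)).measurableEmbedding
  have toLp_mp := PiLp.volume_preserving_toLp (Fin n)
  let G := SchwartzMap.compCLMOfContinuousLinearEquiv ℂ (EuclideanSpace.equiv (Fin n) ℝ) g
  let f' := Lp.compMeasurePreservingₗᵢ ℂ _ (PiLp.volume_preserving_ofLp (Fin n)) f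
  have mul_formula := congrArg (· G) (Lp.fourier_toTemperedDistribution_eq f')
  simp only [TemperedDistribution.fourier_apply, Lp.toTemperedDistribution_apply,
    smul_eq_mul] at mul_formula
  calc ∫ ξ, l2Fourier n f ξ * g ξ
      = ∫ ξ : ℝn n, G (WithLp.toLp 2 ξ) * (𝓕 f') (WithLp.toLp 2 ξ) := by
        refine integral_congr_ae ?_
        filter_upwards [Lp.coeFn_compMeasurePreserving (𝓕 f') toLp_mp] with ξ hξ
        rw [mul_comm]
        exact congrArg (g ξ * ·) hξ
    _ = ∫ ξ, G ξ * (𝓕 f') ξ :=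
        toLp_mp.integral_comp toLp_emb fun ξ ↦ G ξ * (𝓕 f') ξ
    _ = ∫ x, 𝓕 G x * f' x := mul_formula.symm
    _ = ∫ x : ℝn n, 𝓕 G (WithLp.toLp 2 x) * f' (WithLp.toLp 2 x) :=
        (toLp_mp.integral_comp toLp_emb fun x ↦ 𝓕 G x * f' x).symm
    _ = ∫ x, f x * ftrans g x := by
        refine integral_congr_ae ?_
        filter_upwards [toLp_mp.quasiMeasurePreserving.ae
          (Lp.coeFn_compMeasurePreserving f (PiLp.volume_preserving_ofLp (Fin n)))] with x hx
        rw [ftrans_schwartzMap, mul_comm]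
        exact congrArg (· * _) hx

end L2Fourier

section Uniqueness

open scoped SchwartzMap

variable {E : Type*} [NormedAddCommGroup E] [NormedSpace ℝ E]

lemma exists_schwartzMap_eq_ofReal {g : E → ℝ} (hg : ContDiff ℝ ((⊤ : ℕ∞) : WithTop ℕ∞) g)
    (hsupp : HasCompactSupport g) : ∃ G : 𝓢(E, ℂ), ∀ x, G x = g x :=
  ⟨HasCompactSupport.toSchwartzMap (f := fun x ↦ (g x : ℂ)) (hsupp.comp_left Complex.ofReal_zero)
    (Complex.ofRealCLM.contDiff.comp hg), fun _ ↦ rfl⟩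

variable [FiniteDimensional ℝ E] [MeasurableSpace E] [BorelSpace E] {μ : Measure E}

lemma locallyIntegrable_of_integrable_mul_schwartzMap {w : E → ℂ}
    (hw : ∀ g : 𝓢(E, ℂ), Integrable (fun x ↦ w x * g x) μ) : LocallyIntegrable w μ := by
  intro x
  let b : ContDiffBump x := ⟨1, 2, one_pos, one_lt_two⟩
  obtain ⟨B, hB⟩ := exists_schwartzMap_eq_ofReal b.contDiff b.hasCompactSupport
  refine ⟨Metric.closedBall x 1, Metric.closedBall_mem_nhds x one_pos,
    (hw B).integrableOn.congr_fun (fun y hy ↦ ?_) Metric.isClosed_closedBall.measurableSet⟩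
  simp [hB, b.one_of_mem_closedBall hy]

lemma ae_eq_of_integral_mul_schwartzMap_eq {w w' : E → ℂ}
    (hw : ∀ g : 𝓢(E, ℂ), Integrable (fun x ↦ w x * g x) μ)
    (hw' : ∀ g : 𝓢(E, ℂ), Integrable (fun x ↦ w' x * g x) μ)
    (h : ∀ g : 𝓢(E, ℂ), ∫ x, w x * g x ∂μ = ∫ x, w' x * g x ∂μ) : w =ᵐ[μ] w' := by
  refine ae_eq_of_integral_contDiff_smul_eq (locallyIntegrable_of_integrable_mul_schwartzMap hw)
    (locallyIntegrable_of_integrable_mul_schwartzMap hw') fun g hg hsupp ↦ ?_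
  obtain ⟨G, hG⟩ := exists_schwartzMap_eq_ofReal hg hsupp
  simpa only [hG, Complex.real_smul, mul_comm] using h G

-- If `w'` fails to be integrable against some test function, then the right-hand integral takes
-- its junk value `0` on a set of test functions that spans all of them, hence `w` vanishes.
lemma ae_eq_or_ae_eq_zero_of_integral_mul_schwartzMap_eq {w w' : E → ℂ}
    (hw : ∀ g : 𝓢(E, ℂ), Integrable (fun x ↦ w x * g x) μ)
    (h : ∀ g : 𝓢(E, ℂ), ∫ x, w x * g x ∂μ = ∫ x, w' x * g x ∂μ) :
    w =ᵐ[μ] w' ∨ w =ᵐ[μ] 0 := by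
  by_cases hw' : ∀ g : 𝓢(E, ℂ), Integrable (fun x ↦ w' x * g x) μ
  · exact .inl (ae_eq_of_integral_mul_schwartzMap_eq hw hw' h)
  push Not at hw'
  obtain ⟨g₀, hg₀⟩ := hw'
  have integral_eq_zero_of_not_integrable {g : 𝓢(E, ℂ)}
      (hg : ¬ Integrable (fun x ↦ w' x * g x) μ) : ∫ x, w x * g x ∂μ = 0 :=
    (h g).trans (integral_undef hg)
  have integral_eq_zero (g : 𝓢(E, ℂ)) : ∫ x, w x * g x ∂μ = 0 := by
    by_cases hg : Integrable (fun x ↦ w' x * g x) μ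
    · have not_integrable_add : ¬ Integrable (fun x ↦ w' x * (g + g₀) x) μ := fun hadd ↦
        hg₀ ((hadd.sub hg).congr (.of_forall fun x ↦ by simp [mul_add]))
      have integral_add_eq := integral_add (hw g) (hw g₀)
      simp only [← mul_add, ← add_apply] at integral_add_eq
      rw [integral_eq_zero_of_not_integrable not_integrable_add,
        integral_eq_zero_of_not_integrable hg₀, add_zero] at integral_add_eq
      exact integral_add_eq.symm
    · exact integral_eq_zero_of_not_integrable hg
  exact .inr (ae_eq_of_integral_mul_schwartzMap_eq hw (by simp) (by simpa using integral_eq_zero))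

end Uniqueness

section Dilation

variable {n : ℕ} {N : Matrix (Fin n) (Fin n) ℝ}

lemma memLp_tran {f : ℝn n → ℂ} {p : ℝ≥0∞} (hf : MemLp f p volume) (y : ℝn n) :
    MemLp (tran y f) p volume :=
  hf.comp_measurePreserving (measurePreserving_sub_right volume y)

lemma memLp_dila (hN : IsUnit N.det) {f : ℝn n → ℂ} {p : ℝ≥0∞} (hf : MemLp f p volume) :
    MemLp (dila N f) p volume :=
  (memLp_comp_mulVec hN hf).const_mul _

lemma sqrt_abs_det_inv (N : Matrix (Fin n) (Fin n) ℝ) :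
    √|N⁻¹.det| = (√|N.det|)⁻¹ := by
  rw [Matrix.det_nonsing_inv, Ring.inverse_eq_inv', abs_inv, Real.sqrt_inv]

lemma conj_dila (N : Matrix (Fin n) (Fin n) ℝ) (f : ℝn n → ℂ) (x : ℝn n) :
    conj (dila N f x) = dila N (fun y ↦ conj (f y)) x := by
  simp [dila]

lemma enorm_dila (N : Matrix (Fin n) (Fin n) ℝ) (f : ℝn n → ℂ) (x : ℝn n) :
    ‖dila N f x‖ₑ = ENNReal.ofReal √|N.det| * ‖f (N.mulVec x)‖ₑ := by
  rw [dila, enorm_mul, ← ofReal_norm, Complex.norm_real, Real.norm_of_nonneg (Real.sqrt_nonneg _)]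

lemma inv_mulVec_mulVec (hN : IsUnit N.det) (x : ℝn n) : N⁻¹.mulVec (N.mulVec x) = x := by
  rw [Matrix.mulVec_mulVec, Matrix.nonsing_inv_mul N hN, Matrix.one_mulVec]

lemma integral_dila_mul (hN : IsUnit N.det) (f g : ℝn n → ℂ) :
    ∫ x, dila N f x * g x = ∫ x, f x * dila N⁻¹ g x := by
  have hsqrt : |N.det|⁻¹ * √|N.det| = (√|N.det|)⁻¹ := by
    rw [inv_mul_eq_div, Real.sqrt_div_self', one_div]
  calc ∫ x, dila N f x * g x
      = |N.det|⁻¹ • ∫ y, (√|N.det| : ℂ) * f y * g (N⁻¹.mulVec y) := by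
        rw [← integral_comp_mulVec hN fun y ↦ (√|N.det| : ℂ) * f y * g (N⁻¹.mulVec y)]
        simp only [dila, inv_mulVec_mulVec hN]
    _ = ∫ x, f x * dila N⁻¹ g x := by
        rw [← integral_smul]
        refine integral_congr_ae (.of_forall fun x ↦ ?_)
        simp only [dila, sqrt_abs_det_inv, ← hsqrt, Complex.real_smul]
        push_cast
        ring

lemma ip_dila_right (hN : IsUnit N.det) (f g : ℝn n → ℂ) :
    ip f (dila N g) = ip (dila N⁻¹ f) g := by
  simp only [ip, conj_dila, mul_comm (f _), integral_dila_mul hN]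
  simp only [mul_comm]

lemma lintegral_sq_enorm_dila_mul (hN : IsUnit N.det) (f : ℝn n → ℂ) (c : ℝn n → ℝ≥0∞) :
    ∫⁻ x, ‖dila N f x‖ₑ ^ 2 * c x = ∫⁻ x, ‖f x‖ₑ ^ 2 * c (N⁻¹.mulVec x) := by
  have hdet : 0 < |N.det| := abs_pos.mpr hN.ne_zero
  calc ∫⁻ x, ‖dila N f x‖ₑ ^ 2 * c x
      = ∫⁻ x, ENNReal.ofReal |N.det| * (‖f (N.mulVec x)‖ₑ ^ 2 * c x) := by
        refine lintegral_congr fun x ↦ ?_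
        rw [enorm_dila, mul_pow, ← ENNReal.ofReal_pow (Real.sqrt_nonneg _),
          Real.sq_sqrt hdet.le, mul_assoc]
    _ = ENNReal.ofReal |N.det| *
          (ENNReal.ofReal |N.det|⁻¹ * ∫⁻ y, ‖f y‖ₑ ^ 2 * c (N⁻¹.mulVec y)) := by
        rw [lintegral_const_mul' _ _ ENNReal.ofReal_ne_top,
          ← lintegral_comp_mulVec hN fun y ↦ ‖f y‖ₑ ^ 2 * c (N⁻¹.mulVec y)]
        simp only [inv_mulVec_mulVec hN]
    _ = ∫⁻ x, ‖f x‖ₑ ^ 2 * c (N⁻¹.mulVec x) := by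
        rw [← mul_assoc, ← ENNReal.ofReal_mul hdet.le, mul_inv_cancel₀ hdet.ne',
          ENNReal.ofReal_one, one_mul]

lemma tran_mulVec_eq_dila (hN : IsUnit N.det) (y : ℝn n) (f : ℝn n → ℂ) :
    tran (N.mulVec y) f = dila N⁻¹ (tran y (dila N f)) := by
  ext x
  have hdet : (√|N.det| : ℂ) ≠ 0 := by
    exact_mod_cast (Real.sqrt_pos.mpr (abs_pos.mpr hN.ne_zero)).ne'
  have hx : N.mulVec (N⁻¹.mulVec x) = x := by
    rw [Matrix.mulVec_mulVec, Matrix.mul_nonsing_inv N hN, Matrix.one_mulVec]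
  simp only [dila, tran, Matrix.mulVec_sub, hx, sqrt_abs_det_inv]
  push_cast
  rw [inv_mul_cancel_left₀ hdet]

end Dilation

section FourierPair

open scoped SchwartzMap

variable {n : ℕ} {w f : ℝn n → ℂ}

lemma ftrans_fourierKernel_mul (g : ℝn n → ℂ) (x y : ℝn n) :
    ftrans (fun ξ ↦ fourierKernel y ξ * g ξ) x = ftrans g (x + y) := by
  refine integral_congr_ae (.of_forall fun ξ ↦ ?_)
  change fourierKernel x ξ * (fourierKernel y ξ * g ξ) = fourierKernel (x + y) ξ * g ξ
  rw [fourierKernel_comm (x + y), fourierKernel_add_right, fourierKernel_comm ξ,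
    fourierKernel_comm ξ, mul_assoc]

lemma ftrans_dila {N : Matrix (Fin n) (Fin n) ℝ} (hN : IsUnit N.det) (g : ℝn n → ℂ) :
    ftrans (dila N g) = dila (N.transpose)⁻¹ (ftrans g) := by
  ext ξ
  calc ftrans (dila N g) ξ = ∫ x, dila N g x * fourierKernel ξ x := by
        simp only [ftrans, fourierKernel, mul_comm]
    _ = ∫ x, g x * dila N⁻¹ (fourierKernel ξ) x := integral_dila_mul hN _ _
    _ = ∫ x, (√|N⁻¹.det| : ℂ) * (fourierKernel ((N.transpose)⁻¹.mulVec ξ) x * g x) := by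
        simp only [dila, fourierKernel_mulVec, ← Matrix.transpose_nonsing_inv,
          Matrix.transpose_transpose]
        exact integral_congr_ae (.of_forall fun x ↦ by ring)
    _ = dila (N.transpose)⁻¹ (ftrans g) ξ := by
        rw [integral_const_mul, dila, ← Matrix.transpose_nonsing_inv, Matrix.det_transpose]
        rfl

lemma exists_schwartzMap_eq_dila {N : Matrix (Fin n) (Fin n) ℝ} (hN : IsUnit N.det)
    (g : 𝓢(ℝn n, ℂ)) : ∃ G : 𝓢(ℝn n, ℂ), ⇑G = dila N g :=
  ⟨(√|N.det| : ℂ) • SchwartzMap.compCLMOfContinuousLinearEquiv ℂ (mulVecEquiv hN) g, rfl⟩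

lemma IsFourierPair.tran (h : IsFourierPair w f) (y : ℝn n) :
    IsFourierPair (fun ξ ↦ fourierKernel y ξ * w ξ) (tran y f) := by
  intro g
  have hg : ⇑(SchwartzMap.smulLeftCLM ℂ (fourierKernel y) g) =
      fun ξ ↦ fourierKernel y ξ * g ξ :=
    funext (SchwartzMap.smulLeftCLM_apply_apply (hasTemperateGrowth_fourierKernel y) g)
  calc ∫ ξ, fourierKernel y ξ * w ξ * g ξ = ∫ ξ, w ξ * (fourierKernel y ξ * g ξ) :=
        integral_congr_ae (.of_forall fun ξ ↦ by ring)
    _ = ∫ x, f x * ftrans g (x + y) := by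
        have := h (SchwartzMap.smulLeftCLM ℂ (fourierKernel y) g)
        simpa only [hg, ftrans_fourierKernel_mul] using this
    _ = ∫ x, _root_.tran y f x * ftrans g x := by
        rw [← integral_sub_right_eq_self _ y]
        simp only [_root_.tran, sub_add_cancel]

lemma IsFourierPair.dila (h : IsFourierPair w f) {N : Matrix (Fin n) (Fin n) ℝ}
    (hN : IsUnit N.det) : IsFourierPair (dila (N.transpose)⁻¹ w) (dila N f) := by
  have hNt : IsUnit N.transpose.det := by rwa [Matrix.det_transpose]
  intro g
  obtain ⟨G, hG⟩ := exists_schwartzMap_eq_dila hNt g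
  calc ∫ ξ, _root_.dila (N.transpose)⁻¹ w ξ * g ξ = ∫ ξ, w ξ * G ξ := by
        rw [integral_dila_mul (Matrix.isUnit_nonsing_inv_det _ hNt),
          Matrix.nonsing_inv_nonsing_inv _ hNt, hG]
    _ = ∫ x, f x * _root_.dila N⁻¹ (ftrans g) x := by
        rw [h G, hG, ftrans_dila hNt, Matrix.transpose_transpose]
    _ = ∫ x, _root_.dila N f x * ftrans g x := (integral_dila_mul hN _ _).symm

end FourierPair

section L2FourierPair

variable {n : ℕ}

/-- `F` is the `L²` Fourier transform of the square-integrable function `f`. Unlike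
`IsFourierPair`, this determines `F` almost everywhere as a square-integrable function. -/
structure IsL2FourierPair (F f : ℝn n → ℂ) : Prop where
  memLp_left : MemLp F 2 volume
  memLp_right : MemLp f 2 volume
  isFourierPair : IsFourierPair F f

variable {F G f g : ℝn n → ℂ}

lemma IsFourierPair.congr_right (h : IsFourierPair F f) (hfg : f =ᵐ[volume] g) :
    IsFourierPair F g :=
  fun φ ↦ (h φ).trans <| integral_congr_ae <| hfg.mono fun _ hx ↦ congrArg (· * _) hx

lemma isL2FourierPair_l2Fourier (hf : MemLp f 2 volume) :
    IsL2FourierPair (l2Fourier n (hf.toLp f)) f :=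
  ⟨Lp.memLp _, hf, (isFourierPair_l2Fourier _).congr_right hf.coeFn_toLp⟩

namespace IsL2FourierPair

lemma integrable_left_mul_schwartzMap (hF : IsL2FourierPair F f) (φ : SchwartzMap (ℝn n) ℂ) :
    Integrable fun x ↦ F x * φ x :=
  hF.memLp_left.integrable_mul (φ.memLp 2 volume)

lemma toLp_left (hF : IsL2FourierPair F f) :
    hF.memLp_left.toLp F = l2Fourier n (hF.memLp_right.toLp f) := by
  have hUf := isL2FourierPair_l2Fourier hF.memLp_right
  refine Lp.ext (hF.memLp_left.coeFn_toLp.trans ?_)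
  exact ae_eq_of_integral_mul_schwartzMap_eq hF.integrable_left_mul_schwartzMap
    hUf.integrable_left_mul_schwartzMap
    fun φ ↦ (hF.isFourierPair φ).trans (hUf.isFourierPair φ).symm

lemma ip_eq (hF : IsL2FourierPair F f) (hG : IsL2FourierPair G g) : ip F G = ip f g := by
  rw [ip_eq_inner hF.memLp_left hG.memLp_left, hF.toLp_left, hG.toLp_left,
    LinearIsometry.inner_map_map, ip_eq_inner hF.memLp_right hG.memLp_right]

lemma lintegral_sq_enorm_eq (hF : IsL2FourierPair F f) :
    ∫⁻ ξ, ‖F ξ‖ₑ ^ 2 = ∫⁻ x, ‖f x‖ₑ ^ 2 := by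
  rw [lintegral_sq_enorm_eq_sq_enorm_toLp hF.memLp_left, hF.toLp_left,
    LinearIsometry.enorm_map, lintegral_sq_enorm_eq_sq_enorm_toLp hF.memLp_right]

lemma ae_norm_le (hF : IsL2FourierPair F f) (hG : IsFourierPair G f) :
    ∀ᵐ ξ, ‖F ξ‖ ≤ ‖G ξ‖ := by
  rcases ae_eq_or_ae_eq_zero_of_integral_mul_schwartzMap_eq hF.integrable_left_mul_schwartzMap
    (fun φ ↦ (hF.isFourierPair φ).trans (hG φ).symm) with hFG | hF₀
  · exact hFG.mono fun ξ hξ ↦ (congrArg _ hξ).le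
  · exact hF₀.mono fun ξ hξ ↦ by simp [hξ]

lemma tran (hF : IsL2FourierPair F f) (y : ℝn n) :
    IsL2FourierPair (fun ξ ↦ fourierKernel y ξ * F ξ) (tran y f) where
  memLp_left := by
    refine hF.memLp_left.of_le ((continuous_fourierKernel y).aestronglyMeasurable.mul
      hF.memLp_left.aestronglyMeasurable) (.of_forall fun ξ ↦ ?_)
    rw [norm_mul, norm_fourierKernel, one_mul]
  memLp_right := memLp_tran hF.memLp_right y
  isFourierPair := hF.isFourierPair.tran y

lemma dila (hF : IsL2FourierPair F f) {N : Matrix (Fin n) (Fin n) ℝ} (hN : IsUnit N.det) :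
    IsL2FourierPair (dila (N.transpose)⁻¹ F) (dila N f) where
  memLp_left := memLp_dila
    (Matrix.isUnit_nonsing_inv_det _ (N.det_transpose.symm ▸ hN)) hF.memLp_left
  memLp_right := memLp_dila hN hF.memLp_right
  isFourierPair := hF.isFourierPair.dila hN

end IsL2FourierPair

end L2FourierPair

section BesselBound

open Matrix

variable {n : ℕ} {N P : Matrix (Fin n) (Fin n) ℝ} {F Φ f φ : ℝn n → ℂ}

/-- The correlation sum `∑_{γ ∈ Qℤⁿ} |Φ(ξ) Φ(ξ + γ)|`, which in the wavelet condition is taken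
with `Φ` the Fourier transform of the generator and `Qℤⁿ` the dual lattice. It is
`ℝ≥0∞`-valued, so that no summability is needed. -/
def latticeCorr (Q : Matrix (Fin n) (Fin n) ℝ) (Φ : ℝn n → ℂ) (ξ : ℝn n) : ℝ≥0∞ :=
  ∑' m : Fin n → ℤ, ‖Φ ξ * Φ (ξ + Q.mulVec (ivec m))‖ₑ

lemma latticeCorr_one_dila (Q : Matrix (Fin n) (Fin n) ℝ) (Φ : ℝn n → ℂ) (ξ : ℝn n) :
    latticeCorr 1 (dila Q Φ) ξ =
      ENNReal.ofReal |Q.det| * latticeCorr Q Φ (Q.mulVec ξ) := by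
  simp only [latticeCorr, ← ENNReal.tsum_mul_left, one_mulVec, enorm_mul, enorm_dila, mulVec_add]
  refine tsum_congr fun m ↦ ?_
  rw [mul_mul_mul_comm, ← ENNReal.ofReal_mul (Real.sqrt_nonneg _),
    Real.mul_self_sqrt (abs_nonneg _)]

lemma aemeasurable_latticeCorr (Q : Matrix (Fin n) (Fin n) ℝ) (hΦ : AEStronglyMeasurable Φ) :
    AEMeasurable (latticeCorr Q Φ) :=
  AEMeasurable.tsum fun m ↦ (hΦ.mul (hΦ.comp_quasiMeasurePreserving
    (measurePreserving_add_right volume (Q.mulVec (ivec m))).quasiMeasurePreserving)).enorm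

lemma enorm_ip_comm (f g : ℝn n → ℂ) : ‖ip f g‖ₑ = ‖ip g f‖ₑ := by
  have hconj : ip f g = conj (ip g f) := by
    rw [ip, ip, ← integral_conj]
    simp only [map_mul, Complex.conj_conj, mul_comm]
  rw [hconj, RCLike.enorm_conj]

lemma tsum_sq_enorm_ip_tran_ivec_le (hF : IsL2FourierPair F f) (hΦ : IsL2FourierPair Φ φ) :
    ∑' k : Fin n → ℤ, ‖ip f (tran (ivec k) φ)‖ₑ ^ 2 ≤
      ∫⁻ ξ, ‖F ξ‖ₑ ^ 2 * latticeCorr 1 Φ ξ := by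
  have hFconj : MemLp (fun ξ ↦ conj (F ξ)) 2 volume := hF.memLp_left.star
  have hip (k : Fin n → ℤ) : ‖ip f (tran (ivec k) φ)‖ₑ =
      ‖∫ ξ, fourierKernel (ivec k) ξ * (conj (F ξ) * Φ ξ)‖ₑ := by
    rw [enorm_ip_comm, ← (hΦ.tran (ivec k)).ip_eq hF, ip]
    simp only [mul_assoc, mul_comm (conj _)]
  simpa only [hip, latticeCorr, one_mulVec, RCLike.enorm_conj] using
    tsum_sq_enorm_integral_mul_le hFconj.aestronglyMeasurable hΦ.memLp_left.aestronglyMeasurable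
      (hFconj.integrable_mul hΦ.memLp_left)

lemma tsum_sq_enorm_ip_tran_le (hP : IsUnit P.det) (hF : IsL2FourierPair F f)
    (hΦ : IsL2FourierPair Φ φ) :
    ∑' k : Fin n → ℤ, ‖ip f (tran (P.mulVec (ivec k)) φ)‖ₑ ^ 2 ≤
      ENNReal.ofReal |P.det|⁻¹ * ∫⁻ ξ, ‖F ξ‖ₑ ^ 2 * latticeCorr (Pᵀ)⁻¹ Φ ξ := by
  have hPt : IsUnit Pᵀ.det := by rwa [det_transpose]
  have hdet : |((Pᵀ)⁻¹).det| = |P.det|⁻¹ := by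
    rw [det_nonsing_inv, Ring.inverse_eq_inv', abs_inv, det_transpose]
  calc ∑' k : Fin n → ℤ, ‖ip f (tran (P.mulVec (ivec k)) φ)‖ₑ ^ 2
      = ∑' k : Fin n → ℤ, ‖ip (dila P f) (tran (ivec k) (dila P φ))‖ₑ ^ 2 := by
        simp only [tran_mulVec_eq_dila hP, ip_dila_right (isUnit_nonsing_inv_det _ hP),
          nonsing_inv_nonsing_inv _ hP]
    _ ≤ ∫⁻ ξ, ‖dila (Pᵀ)⁻¹ F ξ‖ₑ ^ 2 * latticeCorr 1 (dila (Pᵀ)⁻¹ Φ) ξ :=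
        tsum_sq_enorm_ip_tran_ivec_le (hF.dila hP) (hΦ.dila hP)
    _ = ∫⁻ ξ, ‖F ξ‖ₑ ^ 2 * (ENNReal.ofReal |P.det|⁻¹ * latticeCorr (Pᵀ)⁻¹ Φ ξ) := by
        simp only [latticeCorr_one_dila, hdet]
        rw [lintegral_sq_enorm_dila_mul (isUnit_nonsing_inv_det _ hPt) F fun ξ ↦
          ENNReal.ofReal |P.det|⁻¹ * latticeCorr (Pᵀ)⁻¹ Φ ((Pᵀ)⁻¹.mulVec ξ)]
        simp only [nonsing_inv_nonsing_inv _ hPt, inv_mulVec_mulVec hPt]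
    _ = ENNReal.ofReal |P.det|⁻¹ * ∫⁻ ξ, ‖F ξ‖ₑ ^ 2 * latticeCorr (Pᵀ)⁻¹ Φ ξ := by
        rw [← lintegral_const_mul' _ _ ENNReal.ofReal_ne_top]
        simp only [mul_left_comm]

lemma tsum_sq_enorm_ip_dila_tran_le (hN : IsUnit N.det) (hP : IsUnit P.det)
    (hF : IsL2FourierPair F f) (hΦ : IsL2FourierPair Φ φ) :
    ∑' k : Fin n → ℤ, ‖ip f (dila N (tran (P.mulVec (ivec k)) φ))‖ₑ ^ 2 ≤
      ENNReal.ofReal |P.det|⁻¹ *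
        ∫⁻ ξ, ‖F ξ‖ₑ ^ 2 * latticeCorr (Pᵀ)⁻¹ Φ ((Nᵀ)⁻¹.mulVec ξ) := by
  have hNt : IsUnit Nᵀ.det := by rwa [det_transpose]
  have hinv : ((N⁻¹)ᵀ)⁻¹ = Nᵀ := by rw [transpose_nonsing_inv, nonsing_inv_nonsing_inv _ hNt]
  simp only [ip_dila_right hN]
  refine (tsum_sq_enorm_ip_tran_le hP (hF.dila (isUnit_nonsing_inv_det _ hN)) hΦ).trans_eq ?_
  rw [hinv, lintegral_sq_enorm_dila_mul hNt]

lemma isBesselWith_dila_tran {ι : Type*} [Countable ι] {N : ι → Matrix (Fin n) (Fin n) ℝ}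
    (hN : ∀ j, IsUnit (N j).det) (hP : IsUnit P.det) (hΦ : IsL2FourierPair Φ φ) {S : ℝ}
    (hS : ∀ᵐ ξ, ∑' j, latticeCorr (Pᵀ)⁻¹ Φ (((N j)ᵀ)⁻¹.mulVec ξ) ≤ ENNReal.ofReal S) :
    IsBesselWith (fun p : ι × (Fin n → ℤ) ↦ dila (N p.1) (tran (P.mulVec (ivec p.2)) φ))
      (|P.det|⁻¹ * S) := by
  intro f hf
  have hF := isL2FourierPair_l2Fourier hf
  set F := l2Fourier n (hf.toLp f)
  have hF_meas : AEMeasurable fun ξ ↦ ‖F ξ‖ₑ ^ 2 :=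
    hF.memLp_left.aestronglyMeasurable.enorm.pow_const 2
  have hcorr_meas (j : ι) :
      AEMeasurable fun ξ ↦ latticeCorr (Pᵀ)⁻¹ Φ (((N j)ᵀ)⁻¹.mulVec ξ) :=
    (aemeasurable_latticeCorr _ hΦ.memLp_left.aestronglyMeasurable).comp_quasiMeasurePreserving
      (quasiMeasurePreserving_mulVec
        (isUnit_nonsing_inv_det _ ((N j).det_transpose.symm ▸ hN j)))
  simp only [← enorm_eq_nnnorm]
  calc ∑' p : ι × (Fin n → ℤ), ‖ip f (dila (N p.1) (tran (P.mulVec (ivec p.2)) φ))‖ₑ ^ 2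
      = ∑' j, ∑' k, ‖ip f (dila (N j) (tran (P.mulVec (ivec k)) φ))‖ₑ ^ 2 :=
        ENNReal.tsum_prod' ..
    _ ≤ ∑' j, ENNReal.ofReal |P.det|⁻¹ *
          ∫⁻ ξ, ‖F ξ‖ₑ ^ 2 * latticeCorr (Pᵀ)⁻¹ Φ (((N j)ᵀ)⁻¹.mulVec ξ) :=
        ENNReal.tsum_le_tsum fun j ↦ tsum_sq_enorm_ip_dila_tran_le (hN j) hP hF hΦ
    _ = ENNReal.ofReal |P.det|⁻¹ *
          ∫⁻ ξ, ‖F ξ‖ₑ ^ 2 * ∑' j, latticeCorr (Pᵀ)⁻¹ Φ (((N j)ᵀ)⁻¹.mulVec ξ) := by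
        rw [ENNReal.tsum_mul_left, ← lintegral_tsum (f := fun j ξ ↦ ‖F ξ‖ₑ ^ 2 *
          latticeCorr (Pᵀ)⁻¹ Φ (((N j)ᵀ)⁻¹.mulVec ξ)) fun j ↦ hF_meas.mul (hcorr_meas j)]
        simp only [ENNReal.tsum_mul_left]
    _ ≤ ENNReal.ofReal |P.det|⁻¹ * ∫⁻ ξ, ‖F ξ‖ₑ ^ 2 * ENNReal.ofReal S := by
        exact mul_le_mul_right (lintegral_mono_ae (hS.mono fun ξ hξ ↦ by gcongr)) _
    _ = ENNReal.ofReal (|P.det|⁻¹ * S) * ∫⁻ x, ‖f x‖ₑ ^ 2 := by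
        rw [lintegral_mul_const'' _ hF_meas, hF.lintegral_sq_enorm_eq,
          ENNReal.ofReal_mul (by positivity), mul_assoc, mul_comm (∫⁻ x, _)]

end BesselBound

section Orbit

open Matrix

variable {n : ℕ} {A P : Matrix (Fin n) (Fin n) ℝ} {Φ Ψ φ : ℝn n → ℂ} {M : Set (ℝn n)}

lemma IsExpansive.isUnit_det (hA : IsExpansive A) : IsUnit A.det := by
  refine isUnit_iff_ne_zero.mpr fun hdet ↦ ?_
  have hroot : (A.map Complex.ofReal).charpoly.IsRoot 0 := by
    have hdetℂ : (A.map Complex.ofReal).det = 0 := by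
      simpa [hdet] using! (RingHom.map_det Complex.ofRealHom A).symm
    rw [Polynomial.IsRoot, ← Polynomial.coeff_zero_eq_eval_zero]
    simpa [det_eq_sign_charpoly_coeff] using hdetℂ
  simpa using (hA 0 hroot).not_ge

lemma ae_latticeCorr_le_latticeCorr (Q : Matrix (Fin n) (Fin n) ℝ)
    (h : ∀ᵐ ξ, ‖Φ ξ‖ ≤ ‖Ψ ξ‖) : ∀ᵐ ξ, latticeCorr Q Φ ξ ≤ latticeCorr Q Ψ ξ := by
  have hadd : ∀ᵐ ξ, ∀ m : Fin n → ℤ,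
      ‖Φ (ξ + Q.mulVec (ivec m))‖ ≤ ‖Ψ (ξ + Q.mulVec (ivec m))‖ :=
    ae_all_iff.mpr fun m ↦
      (measurePreserving_add_right volume (Q.mulVec (ivec m))).quasiMeasurePreserving.ae h
  filter_upwards [h, hadd] with ξ hξ hξadd
  simp only [latticeCorr, enorm_mul]
  exact ENNReal.tsum_le_tsum fun m ↦
    mul_le_mul' (enorm_le_iff_norm_le.mpr hξ) (enorm_le_iff_norm_le.mpr (hξadd m))

lemma tsum_zpow_mulVec_zpow_mulVec {B : Matrix (Fin n) (Fin n) ℝ} (hB : IsUnit B.det)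
    (c : ℝn n → ℝ≥0∞) (l : ℤ) (ξ : ℝn n) :
    ∑' j : ℤ, c ((B ^ j).mulVec ((B ^ l).mulVec ξ)) = ∑' j : ℤ, c ((B ^ j).mulVec ξ) := by
  simp only [mulVec_mulVec, ← zpow_add hB]
  exact (Equiv.addRight l).tsum_eq fun j ↦ c ((B ^ j).mulVec ξ)

lemma isBesselWith_waveletSystem (hA : IsUnit A.det) (hP : IsUnit P.det)
    (hφ : MemLp φ 2 volume) (hΨ : IsFourierPair Ψ φ)
    (hM : ∀ᵐ ξ, ξ ∈ ⋃ l : ℤ, mimg (Aᵀ ^ l) M) {S : ℝ}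
    (hS : ∀ ξ ∈ M,
      ∑' j : ℤ, latticeCorr (Pᵀ)⁻¹ Ψ ((Aᵀ ^ j).mulVec ξ) ≤ ENNReal.ofReal S) :
    IsBesselWith (waveletSystem A P φ) (|P.det|⁻¹ * S) := by
  have hAt : IsUnit Aᵀ.det := by rwa [det_transpose]
  have hΦ := isL2FourierPair_l2Fourier hφ
  set Φ := l2Fourier n (hφ.toLp φ)
  have hcorr_le : ∀ᵐ ξ, ∀ j : ℤ, latticeCorr (Pᵀ)⁻¹ Φ ((Aᵀ ^ j).mulVec ξ) ≤
      latticeCorr (Pᵀ)⁻¹ Ψ ((Aᵀ ^ j).mulVec ξ) :=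
    ae_all_iff.mpr fun j ↦ (quasiMeasurePreserving_mulVec
      (isUnit_det_zpow_iff.mpr (.inl hAt))).ae
        (ae_latticeCorr_le_latticeCorr _ (hΦ.ae_norm_le hΨ))
  refine isBesselWith_dila_tran (N := fun j : ℤ ↦ A ^ j)
    (fun j ↦ isUnit_det_zpow_iff.mpr (.inl hA)) hP hΦ ?_
  filter_upwards [hcorr_le, hM] with ξ hξ hξM
  obtain ⟨l, ξ₀, hξ₀, rfl⟩ := mem_iUnion.mp hξM
  calc ∑' j : ℤ, latticeCorr (Pᵀ)⁻¹ Φ (((A ^ j)ᵀ)⁻¹.mulVec ((Aᵀ ^ l).mulVec ξ₀))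
      = ∑' j : ℤ, latticeCorr (Pᵀ)⁻¹ Φ ((Aᵀ ^ (-j)).mulVec ((Aᵀ ^ l).mulVec ξ₀)) := by
        simp only [transpose_zpow, zpow_neg hAt]
    _ = ∑' j : ℤ, latticeCorr (Pᵀ)⁻¹ Φ ((Aᵀ ^ j).mulVec ((Aᵀ ^ l).mulVec ξ₀)) :=
        (Equiv.neg ℤ).tsum_eq fun j ↦
          latticeCorr (Pᵀ)⁻¹ Φ ((Aᵀ ^ j).mulVec ((Aᵀ ^ l).mulVec ξ₀))
    _ ≤ ∑' j : ℤ, latticeCorr (Pᵀ)⁻¹ Ψ ((Aᵀ ^ j).mulVec ((Aᵀ ^ l).mulVec ξ₀)) :=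
        ENNReal.tsum_le_tsum hξ
    _ = ∑' j : ℤ, latticeCorr (Pᵀ)⁻¹ Ψ ((Aᵀ ^ j).mulVec ξ₀) :=
        tsum_zpow_mulVec_zpow_mulVec hAt _ l ξ₀
    _ ≤ ENNReal.ofReal S := hS ξ₀ hξ₀

lemma tsum_latticeCorr_eq_ofReal_tsum {B Q : Matrix (Fin n) (Fin n) ℝ} {ξ : ℝn n}
    (hsum : Summable fun p : ℤ × (Fin n → ℤ) ↦
      ‖Ψ ((B ^ p.1).mulVec ξ) * Ψ ((B ^ p.1).mulVec ξ + Q.mulVec (ivec p.2))‖) :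
    ∑' j : ℤ, latticeCorr Q Ψ ((B ^ j).mulVec ξ) =
      ENNReal.ofReal (∑' p : ℤ × (Fin n → ℤ),
        ‖Ψ ((B ^ p.1).mulVec ξ) * Ψ ((B ^ p.1).mulVec ξ + Q.mulVec (ivec p.2))‖) := by
  rw [ENNReal.ofReal_tsum_of_nonneg (fun _ ↦ norm_nonneg _) hsum, ENNReal.tsum_prod']
  simp only [latticeCorr, ofReal_norm]

end Orbit

open Matrix in
theorem wavelet_bessel_condition_general
    {n : ℕ}
    (A : Matrix (Fin n) (Fin n) ℝ) (hA : IsUnit A.det)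
    (P : Matrix (Fin n) (Fin n) ℝ) (hP : IsUnit P.det)
    (φ : ℝn n → ℂ) (hφ : MemLp φ 2 volume)
    (φhat : ℝn n → ℂ) (hhat : IsFourierPair φhat φ)
    (M : Set (ℝn n)) (hM : ∀ᵐ ξ, ξ ∈ ⋃ l : ℤ, mimg (Aᵀ ^ l) M)
    (hsum : ∀ ξ ∈ M, Summable (fun p : ℤ × (Fin n → ℤ) =>
      ‖φhat ((Aᵀ ^ p.1).mulVec ξ) *
        φhat ((Aᵀ ^ p.1).mulVec ξ + (Pᵀ)⁻¹.mulVec (ivec p.2))‖))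
    (hbdd : BddAbove ((fun ξ => ∑' p : ℤ × (Fin n → ℤ),
      ‖φhat ((Aᵀ ^ p.1).mulVec ξ) *
        φhat ((Aᵀ ^ p.1).mulVec ξ + (Pᵀ)⁻¹.mulVec (ivec p.2))‖) '' M))
    (C₂ : ℝ)
    (hC₂ : C₂ = (1 / |P.det|) * sSup ((fun ξ => ∑' p : ℤ × (Fin n → ℤ),
      ‖φhat ((Aᵀ ^ p.1).mulVec ξ) *
        φhat ((Aᵀ ^ p.1).mulVec ξ + (Pᵀ)⁻¹.mulVec (ivec p.2))‖) '' M)) :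
    IsBesselWith (waveletSystem A P φ) C₂ := by
  rw [hC₂, one_div]
  refine isBesselWith_waveletSystem hA hP hφ hhat hM fun ξ hξ ↦ ?_
  rw [tsum_latticeCorr_eq_ofReal_tsum (hsum ξ hξ)]
  exact ENNReal.ofReal_le_ofReal (le_csSup hbdd (mem_image_of_mem _ hξ))

open Matrix in
/-- Lemma 2.2, Bessel part: a sufficient condition for a wavelet system
to be a Bessel sequence with bound `C₂`. -/
theorem wavelet_bessel_condition
    {n : ℕ}
    (A : Matrix (Fin n) (Fin n) ℝ) (hA : IsExpansive A)
    (P : Matrix (Fin n) (Fin n) ℝ) (hP : IsUnit P.det)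
    (φ : ℝn n → ℂ) (hφ : MemLp φ 2 volume)
    (φhat : ℝn n → ℂ) (hhat : IsFourierPair φhat φ)
    (M : Set (ℝn n)) (hM : (⋃ l : ℤ, mimg (Aᵀ ^ l) M) = Set.univ)
    (hsum : ∀ ξ ∈ M, Summable (fun p : ℤ × (Fin n → ℤ) =>
      ‖φhat ((Aᵀ ^ p.1).mulVec ξ) *
        φhat ((Aᵀ ^ p.1).mulVec ξ + (Pᵀ)⁻¹.mulVec (ivec p.2))‖))
    (hbdd : BddAbove ((fun ξ => ∑' p : ℤ × (Fin n → ℤ),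
      ‖φhat ((Aᵀ ^ p.1).mulVec ξ) *
        φhat ((Aᵀ ^ p.1).mulVec ξ + (Pᵀ)⁻¹.mulVec (ivec p.2))‖) '' M))
    (C₂ : ℝ)
    (hC₂ : C₂ = (1 / |P.det|) * sSup ((fun ξ => ∑' p : ℤ × (Fin n → ℤ),
      ‖φhat ((Aᵀ ^ p.1).mulVec ξ) *
        φhat ((Aᵀ ^ p.1).mulVec ξ + (Pᵀ)⁻¹.mulVec (ivec p.2))‖) '' M)) :
    IsBesselWith (waveletSystem A P φ) C₂ :=
  wavelet_bessel_condition_general A hA.isUnit_det P hP φ hφ φhat hhat M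
    (.of_forall fun ξ ↦ hM ▸ mem_univ ξ) hsum hbdd C₂ hC₂

end
end

section
/- Let B ∈ GL_n(ℝ) and let K ∈ GL_n(ℝ) be symmetric positive definite with associated Hermitian norm ‖x‖_* = (xᵗKx)^{1/2}, satisfying ‖Bx‖_* ≥ λ‖x‖_* for all x ∈ ℝⁿ and some λ > 1. Set I_* = {x : ‖x‖_* ≤ 1} and O_* = I_* \ B⁻¹(I_*). Then for every l ∈ ℕ, the sets B^m(O_*) for m ∈ ℤ are pairwise disjoint, ∪_{m=−l+1}^{l} B^m(O_*) = B^l(I_*) \ B^{−l}(I_*), and this set contains {x ∈ ℝⁿ : λ^{−l} < ‖x‖_* ≤ λ^l}. -/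
open MeasureTheory Complex Set
open scoped ENNReal Topology ComplexConjugate Classical

noncomputable section

/-!
Everything rests on one inclusion: if a map `g` stretches `N` by a factor at least `r`, then
`{N ≤ r ^ k * c} ⊆ g ^ k • {N ≤ c}`. With `k = 1` it shows that the dilates `g ^ m • {N ≤ 1}`
increase with `m`. The dilated annuli are the successive differences of this chain, so they are
disjoint and their unions telescope. With `c = 1` and with `c = r ^ (-k)` the inclusion compares the
dilates of the unit ball with the balls of radius `r ^ k` and `r ^ (-k)`.
-/

open scoped Function Pointwise

section SuccessiveDifferences

variable {ι : Type*} [LinearOrder ι] [PredOrder ι]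

theorem pairwise_disjoint_sdiff_pred {β : Type*} [GeneralizedBooleanAlgebra β] {S : ι → β}
    (hS : Monotone S) : Pairwise (Disjoint on fun m => S m \ S (Order.pred m)) :=
  (pairwise_disjoint_on _).2 fun _ _ hmn =>
    disjoint_sdiff_self_right.mono_left (sdiff_le.trans (hS (Order.le_pred_of_lt hmn)))

theorem biUnion_Ioc_sdiff_pred {α : Type*} [IsPredArchimedean ι] {S : ι → Set α}
    (hS : Monotone S) (a b : ι) :
    ⋃ m ∈ Ioc a b, S m \ S (Order.pred m) = S b \ S a := by
  rcases le_total b a with hba | hab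
  · simp [Ioc_eq_empty_of_le hba, sdiff_eq_empty.2 (hS hba)]
  · induction hab using Pred.rec with
    | rfl => simp
    | pred k hkb ih =>
      by_cases hk : IsMin k
      · rwa [hk.pred_eq]
      · rw [Order.Ioc_pred_left_eq_insert_of_not_isMin hkb hk, biUnion_insert, ih, union_comm,
          sdiff_union_sdiff_cancel (hS hkb) (hS (Order.pred_le k))]

end SuccessiveDifferences

section Annulus

variable {G α : Type*} [Group G] [MulAction G α] {g : G} {S : Set α}

/-- The annulus `S \ g⁻¹ • S` between a set and its contraction by `g⁻¹`; for the unit ball of a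
norm and the linear map of a matrix `B` it is the set `O_*`. -/
def annulus (g : G) (S : Set α) : Set α := S \ g⁻¹ • S

theorem zpow_smul_annulus (g : G) (S : Set α) (m : ℤ) :
    g ^ m • annulus g S = (g ^ m • S) \ g ^ Order.pred m • S := by
  rw [annulus, smul_set_sdiff, smul_smul, Order.pred_eq_sub_one, zpow_sub_one]

theorem monotone_zpow_smul (hS : S ⊆ g • S) : Monotone fun m : ℤ => g ^ m • S :=
  monotone_int_of_le_succ fun m => by
    simpa only [zpow_add_one, mul_smul] using smul_set_mono (a := g ^ m) hS

theorem pairwise_disjoint_zpow_smul_annulus (hS : S ⊆ g • S) :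
    Pairwise (Disjoint on fun m : ℤ => g ^ m • annulus g S) := by
  simpa only [zpow_smul_annulus] using pairwise_disjoint_sdiff_pred (monotone_zpow_smul hS)

theorem biUnion_Ioc_zpow_smul_annulus (hS : S ⊆ g • S) (a b : ℤ) :
    ⋃ m ∈ Ioc a b, g ^ m • annulus g S = (g ^ b • S) \ g ^ a • S := by
  simpa only [zpow_smul_annulus] using biUnion_Ioc_sdiff_pred (monotone_zpow_smul hS) a b

end Annulus

section Expansion

variable {G α 𝕜 : Type*} [Group G] [MulAction G α] [Field 𝕜] [LinearOrder 𝕜]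
  [IsStrictOrderedRing 𝕜] {g : G} {N : α → 𝕜} {r : 𝕜}

theorem pow_mul_le_apply_pow_smul (hr : 0 ≤ r) (hN : ∀ x, r * N x ≤ N (g • x)) (k : ℕ) (x : α) :
    r ^ k * N x ≤ N (g ^ k • x) := by
  induction k with
  | zero => simp
  | succ k ih =>
    calc r ^ (k + 1) * N x = r * (r ^ k * N x) := by rw [pow_succ', mul_assoc]
      _ ≤ r * N (g ^ k • x) := mul_le_mul_of_nonneg_left ih hr
      _ ≤ N (g • g ^ k • x) := hN _
      _ = N (g ^ (k + 1) • x) := by rw [pow_succ', mul_smul]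

theorem setOf_le_pow_mul_subset_pow_smul (hr : 0 < r) (hN : ∀ x, r * N x ≤ N (g • x)) (k : ℕ)
    (c : 𝕜) : {x | N x ≤ r ^ k * c} ⊆ g ^ k • {x | N x ≤ c} := by
  intro x (hx : N x ≤ r ^ k * c)
  have hstretch : r ^ k * N ((g ^ k)⁻¹ • x) ≤ N x := by
    simpa only [smul_inv_smul] using pow_mul_le_apply_pow_smul hr.le hN k ((g ^ k)⁻¹ • x)
  exact mem_smul_set_iff_inv_smul_mem.2 (le_of_mul_le_mul_left (hstretch.trans hx) (pow_pos hr k))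

theorem setOf_le_one_subset_smul (hr : 1 ≤ r) (hN : ∀ x, r * N x ≤ N (g • x)) :
    {x | N x ≤ 1} ⊆ g • {x | N x ≤ 1} := by
  have hball : {x | N x ≤ r} ⊆ g • {x | N x ≤ 1} := by
    simpa using setOf_le_pow_mul_subset_pow_smul (zero_lt_one.trans_le hr) hN 1 1
  exact Subset.trans (fun _ hx => le_trans hx hr) hball

theorem zpow_neg_smul_setOf_le_one_subset (hr : 0 < r) (hN : ∀ x, r * N x ≤ N (g • x)) (k : ℕ) :
    g ^ (-k : ℤ) • {x | N x ≤ 1} ⊆ {x | N x ≤ r ^ (-k : ℤ)} := by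
  rw [zpow_neg, ← subset_smul_set_iff, zpow_natCast]
  simpa [(pow_pos hr k).ne'] using setOf_le_pow_mul_subset_pow_smul hr hN k (r ^ (-k : ℤ))

theorem setOf_zpow_neg_lt_and_le_zpow_subset (hr : 0 < r) (hN : ∀ x, r * N x ≤ N (g • x)) (k : ℕ) :
    {x | r ^ (-k : ℤ) < N x ∧ N x ≤ r ^ (k : ℤ)} ⊆
      (g ^ (k : ℤ) • {x | N x ≤ 1}) \ g ^ (-k : ℤ) • {x | N x ≤ 1} := by
  rintro x ⟨hlt, hle⟩
  refine ⟨?_, fun hx => hlt.not_ge (zpow_neg_smul_setOf_le_one_subset hr hN k hx)⟩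
  rw [zpow_natCast]
  exact setOf_le_pow_mul_subset_pow_smul hr hN k 1 (by simpa using hle)

theorem dilated_annuli_general (hr : 1 ≤ r) (hN : ∀ x, r * N x ≤ N (g • x)) :
    (Pairwise (Disjoint on fun m : ℤ => g ^ m • annulus g {x | N x ≤ 1})) ∧
    ∀ l : ℕ,
      ⋃ m ∈ Ioc (-l : ℤ) l, g ^ m • annulus g {x | N x ≤ 1} =
        (g ^ (l : ℤ) • {x | N x ≤ 1}) \ g ^ (-l : ℤ) • {x | N x ≤ 1} ∧
      {x | r ^ (-l : ℤ) < N x ∧ N x ≤ r ^ (l : ℤ)} ⊆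
        (g ^ (l : ℤ) • {x | N x ≤ 1}) \ g ^ (-l : ℤ) • {x | N x ≤ 1} :=
  have hball := setOf_le_one_subset_smul hr hN
  ⟨pairwise_disjoint_zpow_smul_annulus hball, fun l =>
    ⟨biUnion_Ioc_zpow_smul_annulus hball _ _,
      setOf_zpow_neg_lt_and_le_zpow_subset (zero_lt_one.trans_le hr) hN l⟩⟩

end Expansion

section MatrixAction

section MulVecUnit

variable {ι R : Type*} [Fintype ι] [DecidableEq ι] [CommRing R]

/-- An invertible matrix as an element of the general linear group of `ι → R`. The detour is needed
because matrices themselves do not act on vectors through `•`. -/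
def mulVecUnit (B : Matrix ι ι R) (hB : IsUnit B.det) : LinearMap.GeneralLinearGroup R (ι → R) :=
  Matrix.GeneralLinearGroup.toLin (Matrix.GeneralLinearGroup.mk'' B hB)

theorem mulVecUnit_smul (B : Matrix ι ι R) (hB : IsUnit B.det) (x : ι → R) :
    mulVecUnit B hB • x = B.mulVec x :=
  rfl

theorem mulVecUnit_zpow (B : Matrix ι ι R) (hB : IsUnit B.det) (m : ℤ) :
    mulVecUnit B hB ^ m = mulVecUnit (B ^ m) (hB.det_zpow m) := by
  rw [mulVecUnit, mulVecUnit, ← map_zpow]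
  exact congrArg _ (Units.ext (Matrix.coe_units_zpow _ m))

end MulVecUnit

variable {n : ℕ} (B : Matrix (Fin n) (Fin n) ℝ) (hB : IsUnit B.det)

theorem mimg_zpow (m : ℤ) (S : Set (ℝn n)) : mimg (B ^ m) S = mulVecUnit B hB ^ m • S := by
  rw [mulVecUnit_zpow]
  exact image_congr fun x _ => (mulVecUnit_smul _ _ x).symm

theorem sdiff_mimg_inv (S : Set (ℝn n)) : S \ mimg B⁻¹ S = annulus (mulVecUnit B hB) S := by
  rw [annulus, ← Matrix.zpow_neg_one, mimg_zpow B hB, zpow_neg_one]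

end MatrixAction

/-- proof of Lemma 3.2: the dilated annuli `B^m(O_*)` are pairwise
disjoint, their union for `m = -l+1, …, l` is `B^l(I_*) \ B^{-l}(I_*)`, and the latter
contains the norm-annulus `{λ^{-l} < ‖x‖_* ≤ λ^l}`. -/
theorem dilated_annuli
    {n : ℕ} (B : Matrix (Fin n) (Fin n) ℝ) (hB : IsUnit B.det)
    (K : Matrix (Fin n) (Fin n) ℝ) (hK : K.PosDef)
    (lam : ℝ) (hlam : 1 < lam)
    (hnorm : ∀ x : ℝn n,
      Real.sqrt (dotProduct (B.mulVec x) (K.mulVec (B.mulVec x))) ≥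
        lam * Real.sqrt (dotProduct x (K.mulVec x)))
    (Istar Ostar : Set (ℝn n))
    (hI : Istar = {x : ℝn n | dotProduct x (K.mulVec x) ≤ 1})
    (hO : Ostar = Istar \ mimg B⁻¹ Istar) :
    (∀ m m' : ℤ, m ≠ m' → Disjoint (mimg (B ^ m) Ostar) (mimg (B ^ m') Ostar)) ∧
    ∀ l : ℕ, 1 ≤ l →
      (⋃ m ∈ Set.Icc (-(l : ℤ) + 1) (l : ℤ), mimg (B ^ m) Ostar) =
          mimg (B ^ (l : ℤ)) Istar \ mimg (B ^ (-(l : ℤ))) Istar ∧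
      {x : ℝn n | lam ^ (-(l : ℤ)) < Real.sqrt (dotProduct x (K.mulVec x)) ∧
          Real.sqrt (dotProduct x (K.mulVec x)) ≤ lam ^ (l : ℤ)} ⊆
        mimg (B ^ (l : ℤ)) Istar \ mimg (B ^ (-(l : ℤ))) Istar := by
  have h := dilated_annuli_general (g := mulVecUnit B hB)
    (N := fun x => Real.sqrt (dotProduct x (K.mulVec x))) hlam.le hnorm
  simp only [Real.sqrt_le_one] at h
  simp only [hO, hI, sdiff_mimg_inv B hB, mimg_zpow B hB, Icc_add_one_left_eq_Ioc]
  exact ⟨fun m m' hne => h.1 hne, fun l _ => h.2 l⟩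

end
end

section
/- Let A ∈ GL_n(ℝ) be expansive, B = Aᵗ, let K be a symmetric positive definite matrix whose Hermitian norm ‖x‖_* = (xᵗKx)^{1/2} satisfies ‖Bx‖_* ≥ λ‖x‖_* for some λ > 1, and let I_* = {x : xᵗKx ≤ 1}. Let μ be the smallest eigenvalue of K and ℓ = μ^{−1/2} (so ℓ = max_{x∈I_*}‖x‖₂). Fix c ∈ ℤ and an integer m ≥ 0, and let P ∈ GL_n(ℝ) satisfy ‖P‖₂ ≤ 1 / ( ℓ ‖A^c‖₂ (1 + ‖A^m‖₂) ). Then for every nonzero γ ∈ (Pᵗ)⁻¹ℤⁿ one has ‖γ‖₂ ≥ ℓ(‖A^c‖₂ + ‖A^{c+m}‖₂), and consequently (B^{c+m}(I_*) + γ) ∩ B^c(I_*) = ∅. -/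
open MeasureTheory Complex Set
open scoped ENNReal Topology ComplexConjugate Classical

noncomputable section

/-- The Euclidean norm on `ℝⁿ`. -/
def euclNorm {n : ℕ} (x : ℝn n) : ℝ := Real.sqrt (∑ i, x i ^ 2)

/-- The spectral (`ℓ² → ℓ²` operator) norm of a matrix. -/
def opNorm2 {n : ℕ} (M : Matrix (Fin n) (Fin n) ℝ) : ℝ :=
  sSup ((fun x => euclNorm (M.mulVec x)) '' {x : ℝn n | euclNorm x ≤ 1})

/-! Every integer vector `z ≠ 0` has `1 ≤ ‖z‖₂ = ‖Pᵗγ‖₂ ≤ ‖P‖₂ ‖γ‖₂` for `γ = (Pᵗ)⁻¹z`, so a small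
`‖P‖₂` forces dual lattice points to be long. The ellipsoid lies in the ball of radius `ℓ`, so the
two sets lie in balls of radii `ℓ‖A^{c+m}‖₂` and `ℓ‖A^c‖₂` whose centres are `‖γ‖₂` apart. These
closed balls may touch, but by strict convexity in at most one point. A common point does occur for
`n = 1`, `A = 2`, `K = 1`, `c = m = 0`, `P = 1/2`, `z = 1`, so the intersection is null but not
always empty. -/

open scoped ComplexOrder Matrix Matrix.Norms.L2Operator MatrixOrder

open Metric WithLp

theorem closedBall_inter_closedBall_subsingleton {E : Type*} [NormedAddCommGroup E]
    [NormedSpace ℝ E] [StrictConvexSpace ℝ E] {a b : E} {r s : ℝ} (h : r + s ≤ dist a b) :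
    (closedBall a r ∩ closedBall b s).Subsingleton := by
  rintro x ⟨hxa, hxb⟩ y ⟨hya, hyb⟩
  by_contra hne
  have midpoint_mem_ball {z : E} {t : ℝ} (hx : x ∈ closedBall z t) (hy : y ∈ closedBall z t) :
      (1 / 2 : ℝ) • x + (1 / 2 : ℝ) • y ∈ ball z t :=
    combo_mem_ball_of_ne hx hy hne (by norm_num) (by norm_num) (by norm_num)
  exact (ball_disjoint_ball h).le_bot ⟨midpoint_mem_ball hxa hya, midpoint_mem_ball hxb hyb⟩

section

variable {𝕜 m n : Type*} [RCLike 𝕜] [Fintype m] [Fintype n]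

theorem one_le_norm_toLp_intCast {p : ℝ≥0∞} [Fact (1 ≤ p)] {z : n → ℤ} (hz : z ≠ 0) :
    1 ≤ ‖toLp p fun i => (z i : ℝ)‖ := by
  obtain ⟨i, hi⟩ := Function.ne_iff.mp hz
  calc (1 : ℝ) ≤ ‖(z i : ℝ)‖ := by
        rw [Real.norm_eq_abs]
        exact_mod_cast Int.one_le_abs hi
    _ ≤ ‖toLp p fun i => (z i : ℝ)‖ := PiLp.norm_apply_le (toLp p fun i => (z i : ℝ)) i

variable [DecidableEq n]

theorem l2_opNorm_transpose [DecidableEq m] (M : Matrix m n ℝ) : ‖Mᵀ‖ = ‖M‖ := by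
  rw [← Matrix.conjTranspose_eq_transpose_of_trivial, Matrix.l2_opNorm_conjTranspose]

theorem norm_toLp_le_l2_opNorm_mul_norm_toLp_inv_mulVec {M : Matrix n n 𝕜} (hM : IsUnit M.det)
    (v : n → 𝕜) : ‖toLp 2 v‖ ≤ ‖M‖ * ‖toLp 2 (M⁻¹ *ᵥ v)‖ := by
  simpa [Matrix.mulVec_mulVec, Matrix.mul_nonsing_inv M hM] using
    M.l2_opNorm_mulVec (toLp 2 (M⁻¹ *ᵥ v))

theorem one_le_l2_opNorm_mul_norm_toLp_inv_transpose_mulVec_intCast {P : Matrix n n ℝ}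
    (hP : IsUnit P.det) {z : n → ℤ} (hz : z ≠ 0) :
    1 ≤ ‖P‖ * ‖toLp 2 ((Pᵀ)⁻¹ *ᵥ fun i => (z i : ℝ))‖ := by
  rw [← l2_opNorm_transpose]
  exact (one_le_norm_toLp_intCast hz).trans <|
    norm_toLp_le_l2_opNorm_mul_norm_toLp_inv_mulVec (P.isUnit_det_transpose hP) _

theorem mul_norm_sq_le_re_dotProduct_mulVec {K : Matrix n n 𝕜} (hK : K.IsHermitian) {μ : ℝ}
    (hμ : ∀ t ∈ spectrum ℝ K, μ ≤ t) (x : n → 𝕜) :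
    μ * ‖toLp 2 x‖ ^ 2 ≤ RCLike.re (star x ⬝ᵥ (K *ᵥ x)) := by
  have hpos : (K - algebraMap ℝ _ μ).PosSemidef :=
    Matrix.le_iff.mp (algebraMap_le_of_le_spectrum hμ hK.isSelfAdjoint)
  have hnorm : RCLike.re (star x ⬝ᵥ x) = ‖toLp 2 x‖ ^ 2 := by
    rw [@norm_sq_eq_re_inner 𝕜, EuclideanSpace.inner_toLp_toLp, dotProduct_comm]
  have hx := hpos.re_dotProduct_nonneg x
  rwa [Matrix.sub_mulVec, Algebra.algebraMap_eq_smul_one, Matrix.smul_mulVec, Matrix.one_mulVec,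
    dotProduct_sub, dotProduct_smul, map_sub, RCLike.smul_re, hnorm, sub_nonneg] at hx

theorem norm_toLp_le_inv_sqrt_of_dotProduct_mulVec_le_one {K : Matrix n n ℝ}
    (hK : K.IsHermitian) {μ : ℝ} (hμ₀ : 0 < μ)
    (hμ : ∀ t ∈ spectrum ℝ K, μ ≤ t) {x : n → ℝ} (hx : x ⬝ᵥ (K *ᵥ x) ≤ 1) :
    ‖toLp 2 x‖ ≤ (√μ)⁻¹ := by
  have hsq : μ * ‖toLp 2 x‖ ^ 2 ≤ 1 := (mul_norm_sq_le_re_dotProduct_mulVec hK hμ x).trans hx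
  rw [← Real.sqrt_inv]
  exact Real.le_sqrt_of_sq_le ((le_inv_mul_iff₀ hμ₀).mpr hsq |>.trans_eq (mul_one _))

theorem translate_mulVec_image_inter_mulVec_image_subsingleton {M N : Matrix m n 𝕜}
    {S : Set (n → 𝕜)} {r : ℝ} (hS : ∀ x ∈ S, ‖toLp 2 x‖ ≤ r) {γ : m → 𝕜}
    (hγ : r * (‖N‖ + ‖M‖) ≤ ‖toLp 2 γ‖) :
    ((· + γ) '' ((M *ᵥ ·) '' S) ∩ (N *ᵥ ·) '' S).Subsingleton := by
  have norm_mulVec_le (L : Matrix m n 𝕜) {x : n → 𝕜} (hx : x ∈ S) :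
      ‖toLp 2 (L *ᵥ x)‖ ≤ r * ‖L‖ :=
    calc ‖toLp 2 (L *ᵥ x)‖ ≤ ‖L‖ * ‖toLp 2 x‖ := L.l2_opNorm_mulVec (toLp 2 x)
      _ ≤ r * ‖L‖ := by rw [mul_comm]; gcongr; exact hS x hx
  let : NormedSpace ℝ (EuclideanSpace 𝕜 m) := NormedSpace.restrictScalars ℝ 𝕜 _
  have hballs : (closedBall (toLp 2 γ) (r * ‖M‖) ∩ closedBall 0 (r * ‖N‖)).Subsingleton :=
    closedBall_inter_closedBall_subsingleton (by rw [dist_zero_right]; linarith)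
  refine (hballs.preimage (toLp_injective 2)).anti ?_
  rintro _ ⟨⟨_, ⟨x, hx, rfl⟩, rfl⟩, y, hy, hxy⟩
  constructor
  · simpa [dist_eq_norm] using norm_mulVec_le M hx
  · simpa [← hxy] using norm_mulVec_le N hy

theorem mul_l2_opNorm_add_zpow_add_le {A : Matrix n n 𝕜} (hA : IsUnit A.det) {r : ℝ}
    (hr : 0 ≤ r) (c m : ℤ) :
    r * (‖A ^ c‖ + ‖A ^ (c + m)‖) ≤ r * ‖A ^ c‖ * (1 + ‖A ^ m‖) := by
  have hmul : ‖A ^ (c + m)‖ ≤ ‖A ^ c‖ * ‖A ^ m‖ := by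
    rw [Matrix.zpow_add hA]
    exact Matrix.l2_opNorm_mul _ _
  calc r * (‖A ^ c‖ + ‖A ^ (c + m)‖) ≤ r * (‖A ^ c‖ + ‖A ^ c‖ * ‖A ^ m‖) := by gcongr
    _ = r * ‖A ^ c‖ * (1 + ‖A ^ m‖) := by ring

end

theorem euclNorm_eq_norm_toLp {n : ℕ} (x : ℝn n) : euclNorm x = ‖toLp 2 x‖ := by
  simp [euclNorm, EuclideanSpace.norm_eq]

theorem opNorm2_eq_l2_opNorm {n : ℕ} (M : Matrix (Fin n) (Fin n) ℝ) : opNorm2 M = ‖M‖ := by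
  have hball : {x : ℝn n | euclNorm x ≤ 1} =
      ofLp '' closedBall (0 : EuclideanSpace ℝ (Fin n)) 1 := by
    ext x
    exact ⟨fun hx => ⟨toLp 2 x, by simpa [euclNorm_eq_norm_toLp] using hx, rfl⟩,
      by rintro ⟨y, hy, rfl⟩; simpa [euclNorm_eq_norm_toLp] using hy⟩
  rw [← Matrix.l2_opNorm_toEuclideanCLM, ← ContinuousLinearMap.sSup_unitClosedBall_eq_norm,
    opNorm2, hball, Set.image_image]
  simp only [euclNorm_eq_norm_toLp, ← Matrix.toEuclideanCLM_toLp, toLp_ofLp]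

theorem crude_lattice_choice_general {n : ℕ} {A K P : Matrix (Fin n) (Fin n) ℝ}
    (hA : IsUnit A.det) (hK : K.PosDef) {μ : ℝ} (hμroot : K.charpoly.IsRoot μ)
    (hμmin : ∀ t : ℝ, K.charpoly.IsRoot t → μ ≤ t) {ℓ : ℝ} (hℓ : ℓ = (√μ)⁻¹) (c m : ℤ)
    (hPdet : IsUnit P.det)
    (hPnorm : opNorm2 P ≤ 1 / (ℓ * opNorm2 (A ^ c) * (1 + opNorm2 (A ^ m))))
    {z : Fin n → ℤ} (hz : z ≠ 0) :
    ℓ * (opNorm2 (A ^ c) + opNorm2 (A ^ (c + m))) ≤ euclNorm ((Pᵀ)⁻¹ *ᵥ ivec z) ∧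
      ((· + (Pᵀ)⁻¹ *ᵥ ivec z) '' mimg (Aᵀ ^ (c + m)) {x | x ⬝ᵥ (K *ᵥ x) ≤ 1} ∩
        mimg (Aᵀ ^ c) {x | x ⬝ᵥ (K *ᵥ x) ≤ 1}).Subsingleton := by
  simp only [opNorm2_eq_l2_opNorm, euclNorm_eq_norm_toLp, one_div] at hPnorm ⊢
  simp only [← Matrix.mem_spectrum_iff_isRoot_charpoly] at hμroot hμmin
  have hμpos : 0 < μ := hK.isStrictlyPositive.spectrum_pos hμroot
  have hℓ₀ : 0 ≤ ℓ := by rw [hℓ]; positivity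
  have hdual : 1 ≤ ‖P‖ * ‖toLp 2 ((Pᵀ)⁻¹ *ᵥ ivec z)‖ :=
    one_le_l2_opNorm_mul_norm_toLp_inv_transpose_mulVec_intCast hPdet hz
  have hPpos : 0 < ‖P‖ := pos_of_mul_pos_left (one_pos.trans_le hdual) (norm_nonneg _)
  have hlong : ℓ * (‖A ^ c‖ + ‖A ^ (c + m)‖) ≤ ‖toLp 2 ((Pᵀ)⁻¹ *ᵥ ivec z)‖ :=
    calc ℓ * (‖A ^ c‖ + ‖A ^ (c + m)‖) ≤ ℓ * ‖A ^ c‖ * (1 + ‖A ^ m‖) :=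
          mul_l2_opNorm_add_zpow_add_le hA hℓ₀ c m
      _ ≤ ‖P‖⁻¹ := le_inv_of_le_inv₀ hPpos hPnorm
      _ ≤ ‖toLp 2 ((Pᵀ)⁻¹ *ᵥ ivec z)‖ := (inv_le_iff_one_le_mul₀' hPpos).mpr hdual
  refine ⟨hlong, translate_mulVec_image_inter_mulVec_image_subsingleton (r := ℓ)
    (fun x hx => ?_) ?_⟩
  · rw [hℓ]
    exact norm_toLp_le_inv_sqrt_of_dotProduct_mulVec_le_one hK.isHermitian hμpos hμmin hx
  · simpa only [← Matrix.transpose_zpow, l2_opNorm_transpose] using hlong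

open Matrix in
/-- Section 3.2: the crude lattice choice.  If `‖P‖₂` is small enough,
then every nonzero dual lattice point `γ ∈ (Pᵗ)⁻¹ℤⁿ` is long, and consequently the
translated ellipsoid `B^{c+m}(I_*) + γ` misses `B^c(I_*)`. -/
theorem crude_lattice_choice
    {n : ℕ}
    (A : Matrix (Fin n) (Fin n) ℝ) (hA : IsExpansive A) (hAu : IsUnit A.det)
    (K : Matrix (Fin n) (Fin n) ℝ) (hK : K.PosDef)
    (lam : ℝ) (hlam : 1 < lam)
    (hnorm : ∀ x : ℝn n,
      Real.sqrt (dotProduct (Aᵀ.mulVec x) (K.mulVec (Aᵀ.mulVec x))) ≥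
        lam * Real.sqrt (dotProduct x (K.mulVec x)))
    (Istar : Set (ℝn n)) (hI : Istar = {x : ℝn n | dotProduct x (K.mulVec x) ≤ 1})
    (μ : ℝ) (hμroot : K.charpoly.IsRoot μ)
    (hμmin : ∀ t : ℝ, K.charpoly.IsRoot t → μ ≤ t)
    (ℓ : ℝ) (hℓ : ℓ = (Real.sqrt μ)⁻¹)
    (c : ℤ) (m : ℕ)
    (P : Matrix (Fin n) (Fin n) ℝ) (hPdet : IsUnit P.det)
    (hPnorm : opNorm2 P ≤ 1 / (ℓ * opNorm2 (A ^ c) * (1 + opNorm2 (A ^ (m : ℤ)))))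
    (z : Fin n → ℤ) (hz : z ≠ 0) :
    euclNorm ((Pᵀ)⁻¹.mulVec (ivec z)) ≥
        ℓ * (opNorm2 (A ^ c) + opNorm2 (A ^ (c + (m : ℤ)))) ∧
    volume (((fun x => x + (Pᵀ)⁻¹.mulVec (ivec z)) ''
        mimg (Aᵀ ^ (c + (m : ℤ))) Istar) ∩ mimg (Aᵀ ^ c) Istar) = 0 := by
  subst hI
  have := (Function.ne_iff.mp hz).nonempty
  exact (crude_lattice_choice_general hAu hK hμroot hμmin hℓ c m hPdet hPnorm hz).imp_right
    fun h => h.measure_zero volume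

end
end

section
/- Let B be the transpose of the quincunx matrix A = [[1, −1], [1, 1]]. Define g: ℝ² → ℝ by g(x₁,x₂) = −1 + 2x₁ + 2x₂ on the triangle J₁ with vertices (1/2,0), (0,1/2), (1/2,1/2); g = 2x₂ on the triangle J₂ with vertices (1/2,0), (1,0), (1/2,1/2); g = 2x₁ on the triangle J₃ with vertices (0,1), (0,1/2), (1/2,1/2); g = 2 − 2x₁ on the triangle J₄ with vertices (1,0), (1,1), (1/2,1/2); g = 2 − 2x₂ on the triangle J₅ with vertices (0,1), (1,1), (1/2,1/2); and g = 0 otherwise. Define \hat{ψ}(ξ₁,ξ₂) = g(|ξ₁|, |ξ₂|). Then ∑_{j∈ℤ} \hat{ψ}(B^j ξ) = 1 for a.e. ξ ∈ ℝ². -/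
open MeasureTheory Complex Set
open scoped ENNReal Topology ComplexConjugate Classical

noncomputable section

/-- The tent-shaped piecewise linear function `g` of Example 2.6, defined on the five
triangles `J₁, …, J₅`. -/
def tentG (x : Fin 2 → ℝ) : ℝ :=
  if x 0 ≤ 1 / 2 ∧ x 1 ≤ 1 / 2 ∧ 1 / 2 ≤ x 0 + x 1 then -1 + 2 * x 0 + 2 * x 1
  else if 0 ≤ x 1 ∧ 1 / 2 ≤ x 0 ∧ x 0 + x 1 ≤ 1 then 2 * x 1
  else if 0 ≤ x 0 ∧ 1 / 2 ≤ x 1 ∧ x 0 + x 1 ≤ 1 then 2 * x 0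
  else if x 0 ≤ 1 ∧ 1 ≤ x 0 + x 1 ∧ x 1 ≤ x 0 then 2 - 2 * x 0
  else if x 1 ≤ 1 ∧ 1 ≤ x 0 + x 1 ∧ x 0 ≤ x 1 then 2 - 2 * x 1
  else 0

/-- `ψ̂(ξ₁, ξ₂) = g(|ξ₁|, |ξ₂|)`: the mirroring of `g` in the two coordinate axes. -/
def quincunxPsiHat (ξ : Fin 2 → ℝ) : ℝ := tentG (fun i => |ξ i|)

/-!
With `B = Aᵀ`, the function `ψ̂` is a difference `φ - φ ∘ B`, where `φ` is a cutoff in the sup norm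
that is `1` near the origin and `0` near infinity. Hence `∑ ψ̂ (B ^ j ξ)` telescopes. Since `B` is
`√2` times a rotation, the orbit `B ^ j ξ` of a point `ξ ≠ 0` tends to `0` as `j → -∞` and to
infinity as `j → ∞`, so the sum has only finitely many nonzero terms and its value is `1 - 0`.
-/

open Matrix Filter Bornology

lemma hasSum_int_sub_succ_of_eventually_eq {G : Type*} [AddCommGroup G] [TopologicalSpace G]
    {a b : G} {u : ℤ → G} (ha : ∀ᶠ j in atBot, u j = a) (hb : ∀ᶠ j in atTop, u j = b) :
    HasSum (fun j => u j - u (j + 1)) (a - b) := by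
  obtain ⟨m, hm⟩ := eventually_atBot.mp ha
  obtain ⟨n, hn⟩ := eventually_atTop.mp hb
  obtain ⟨N, hmN, hnN⟩ : ∃ N : ℕ, -(N : ℤ) ≤ m ∧ n ≤ N :=
    ⟨m.natAbs + n.natAbs, by omega, by omega⟩
  have hsum : ∑ j ∈ Finset.Ico (-N : ℤ) N, (u j - u (j + 1)) = a - b := by
    rw [Finset.sum_Ico_int_sub, hm _ hmN, hn _ hnN]
  rw [← hsum]
  refine hasSum_sum_of_ne_finset_zero fun j hj => ?_
  rw [Finset.mem_Ico, not_and_or, not_le, not_lt] at hj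
  rcases hj with hj | hj
  · rw [hm j (by omega), hm (j + 1) (by omega), sub_self]
  · rw [hn j (by omega), hn (j + 1) (by omega), sub_self]

section Similarity

variable {ι : Type*} [Fintype ι]

lemma norm_le_sqrt_dotProduct_self (v : ι → ℝ) : ‖v‖ ≤ √(v ⬝ᵥ v) := by
  refine (pi_norm_le_iff_of_nonneg (Real.sqrt_nonneg _)).mpr fun i => Real.le_sqrt_of_sq_le ?_
  rw [Real.norm_eq_abs, sq_abs, sq]
  exact Finset.single_le_sum (f := fun i => v i * v i) (fun i _ => mul_self_nonneg (v i))
    (Finset.mem_univ i)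

lemma dotProduct_self_le_card_mul_sq_norm (v : ι → ℝ) :
    v ⬝ᵥ v ≤ Fintype.card ι * ‖v‖ ^ 2 := by
  rw [← nsmul_eq_mul]
  refine Finset.sum_le_card_nsmul _ _ _ fun i _ => ?_
  rw [← sq, ← sq_abs]
  exact pow_le_pow_left₀ (abs_nonneg _) (norm_le_pi_norm v i) 2

section Tendsto

variable {α : Type*} {l : Filter α} {x : α → ι → ℝ}

lemma tendsto_nhds_zero_of_dotProduct_self (hx : Tendsto (fun j => x j ⬝ᵥ x j) l (𝓝 0)) :
    Tendsto x l (𝓝 0) := by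
  have hsqrt : Tendsto (fun j => √(x j ⬝ᵥ x j)) l (𝓝 0) := by
    simpa only [Real.sqrt_zero] using hx.sqrt
  exact squeeze_zero_norm (fun j => norm_le_sqrt_dotProduct_self (x j)) hsqrt

lemma tendsto_cobounded_of_dotProduct_self (hx : Tendsto (fun j => x j ⬝ᵥ x j) l atTop) :
    Tendsto x l (cobounded (ι → ℝ)) := by
  refine tendsto_norm_atTop_iff_cobounded.mp (tendsto_atTop.mpr fun b => ?_)
  filter_upwards [hx.eventually_gt_atTop (Fintype.card ι * b ^ 2)] with j hj
  have hsq : b ^ 2 < ‖x j‖ ^ 2 :=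
    lt_of_mul_lt_mul_left (hj.trans_le (dotProduct_self_le_card_mul_sq_norm (x j)))
      (Nat.cast_nonneg _)
  exact (lt_of_pow_lt_pow_left₀ 2 (norm_nonneg _) hsq).le

end Tendsto

variable [DecidableEq ι]

lemma dotProduct_mulVec_self_of_transpose_mul_self {R : Type*} [CommSemiring R] {M : Matrix ι ι R}
    {c : R} (hM : Mᵀ * M = c • 1) (v : ι → R) :
    (M *ᵥ v) ⬝ᵥ (M *ᵥ v) = c * (v ⬝ᵥ v) := by
  rw [dotProduct_mulVec, ← mulVec_transpose, mulVec_mulVec, hM, smul_mulVec, one_mulVec,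
    smul_dotProduct, smul_eq_mul]

lemma isUnit_det_of_transpose_mul_self {K : Type*} [Field K] {M : Matrix ι ι K} {c : K}
    (hM : Mᵀ * M = c • 1) (hc : c ≠ 0) : IsUnit M.det :=
  isUnit_det_of_left_inverse (B := c⁻¹ • Mᵀ) (by rw [smul_mul, hM, inv_smul_smul₀ hc])

lemma zpow_add_one_mulVec {R : Type*} [CommRing R] {M : Matrix ι ι R} (hM : IsUnit M.det) (j : ℤ)
    (v : ι → R) : M ^ (j + 1) *ᵥ v = M *ᵥ (M ^ j *ᵥ v) := by
  rw [add_comm, zpow_one_add hM, mulVec_mulVec]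

lemma dotProduct_zpow_mulVec_self_of_transpose_mul_self {K : Type*} [Field K] {M : Matrix ι ι K}
    {c : K} (hM : Mᵀ * M = c • 1) (hc : c ≠ 0) (j : ℤ) (v : ι → K) :
    (M ^ j *ᵥ v) ⬝ᵥ (M ^ j *ᵥ v) = c ^ j * (v ⬝ᵥ v) := by
  have hstep (j : ℤ) :
      (M ^ (j + 1) *ᵥ v) ⬝ᵥ (M ^ (j + 1) *ᵥ v) = c * ((M ^ j *ᵥ v) ⬝ᵥ (M ^ j *ᵥ v)) := by
    rw [zpow_add_one_mulVec (isUnit_det_of_transpose_mul_self hM hc),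
      dotProduct_mulVec_self_of_transpose_mul_self hM]
  induction j with
  | zero => simp
  | succ j ih => rw [hstep, ih, zpow_add_one₀ hc]; ring
  | pred j ih =>
    have h := hstep (-j - 1)
    rw [sub_add_cancel, ih] at h
    rw [zpow_sub_one₀ hc, mul_right_comm, h, mul_comm c, mul_inv_cancel_right₀ hc]

variable {M : Matrix ι ι ℝ} {c : ℝ} {ξ : ι → ℝ}

lemma tendsto_zpow_mulVec_atBot (hM : Mᵀ * M = c • 1) (hc : 1 < c) (ξ : ι → ℝ) :
    Tendsto (fun j : ℤ => M ^ j *ᵥ ξ) atBot (𝓝 0) := by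
  refine tendsto_nhds_zero_of_dotProduct_self ?_
  simp only [dotProduct_zpow_mulVec_self_of_transpose_mul_self hM (by positivity)]
  have hpow : Tendsto (fun j : ℤ => c ^ j) atBot (𝓝 0) := by
    simpa only [Function.comp_def, id_eq, Real.rpow_intCast] using
      (tendsto_rpow_atBot_of_base_gt_one c hc).comp (tendsto_intCast_atBot_iff.mpr tendsto_id)
  simpa only [zero_mul] using hpow.mul_const (ξ ⬝ᵥ ξ)

lemma tendsto_zpow_mulVec_atTop (hM : Mᵀ * M = c • 1) (hc : 1 < c) (hξ : ξ ≠ 0) :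
    Tendsto (fun j : ℤ => M ^ j *ᵥ ξ) atTop (cobounded (ι → ℝ)) := by
  refine tendsto_cobounded_of_dotProduct_self ?_
  simp only [dotProduct_zpow_mulVec_self_of_transpose_mul_self hM (by positivity)]
  have hpow : Tendsto (fun j : ℤ => c ^ j) atTop atTop := by
    simpa only [Function.comp_def, Real.rpow_intCast] using
      (tendsto_rpow_atTop_of_base_gt_one c hc).comp tendsto_intCast_atTop_atTop
  have hpos : 0 < ξ ⬝ᵥ ξ := dotProduct_star_self_pos_iff.mpr hξ
  exact hpow.atTop_mul_const hpos

lemma hasSum_sub_mulVec_zpow_mulVec {G : Type*} [AddCommGroup G] [TopologicalSpace G]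
    {φ : (ι → ℝ) → G} {a b : G} (hM : Mᵀ * M = c • 1) (hc : 1 < c) (ha : ∀ᶠ v in 𝓝 0, φ v = a)
    (hb : ∀ᶠ v in cobounded (ι → ℝ), φ v = b) (hξ : ξ ≠ 0) :
    HasSum (fun j : ℤ => φ (M ^ j *ᵥ ξ) - φ (M *ᵥ (M ^ j *ᵥ ξ))) (a - b) := by
  have hdet : IsUnit M.det := isUnit_det_of_transpose_mul_self hM (by positivity)
  simpa only [zpow_add_one_mulVec hdet] using
    hasSum_int_sub_succ_of_eventually_eq ((tendsto_zpow_mulVec_atBot hM hc ξ).eventually ha)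
      ((tendsto_zpow_mulVec_atTop hM hc hξ).eventually hb)

end Similarity

/-- The piecewise linear profile equal to `1` on `(-∞, 1/2]`, to `0` on `[1, ∞)` and affine in
between. Composed with the sup norm it is the cutoff whose dilation differences give `ψ̂`. -/
def ramp (t : ℝ) : ℝ := max 0 (min 1 (2 - 2 * t))

section Ramp

variable {t : ℝ}

lemma ramp_of_le_half (ht : t ≤ 1 / 2) : ramp t = 1 := by
  rw [ramp, min_eq_left (by linarith), max_eq_right zero_le_one]

lemma ramp_of_half_le_of_le_one (h : 1 / 2 ≤ t) (h' : t ≤ 1) : ramp t = 2 - 2 * t := by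
  rw [ramp, min_eq_right (by linarith), max_eq_right (by linarith)]

lemma ramp_of_one_le (ht : 1 ≤ t) : ramp t = 0 :=
  max_eq_left ((min_le_right _ _).trans (by linarith))

lemma eventually_ramp_norm_eq_one {E : Type*} [SeminormedAddGroup E] :
    ∀ᶠ v in 𝓝 (0 : E), ramp ‖v‖ = 1 :=
  (tendsto_norm_zero.eventually_le_const one_half_pos).mono fun _ => ramp_of_le_half

lemma eventually_ramp_norm_eq_zero {E : Type*} [SeminormedAddGroup E] :
    ∀ᶠ v in cobounded E, ramp ‖v‖ = 0 :=
  (tendsto_norm_cobounded_atTop.eventually_ge_atTop 1).mono fun _ => ramp_of_one_le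

end Ramp

lemma tentG_eq_ramp_sub_ramp {x : Fin 2 → ℝ} (h₀ : 0 ≤ x 0) (h₁ : 0 ≤ x 1) :
    tentG x = ramp (max (x 0) (x 1)) - ramp (x 0 + x 1) := by
  unfold tentG
  split_ifs with hJ₁ hJ₂ hJ₃ hJ₄ hJ₅
  · rw [ramp_of_le_half (max_le hJ₁.1 hJ₁.2.1),
      ramp_of_half_le_of_le_one hJ₁.2.2 (by linarith)]
    ring
  · rw [max_eq_left (by linarith), ramp_of_half_le_of_le_one hJ₂.2.1 (by linarith),
      ramp_of_half_le_of_le_one (by linarith) hJ₂.2.2]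
    ring
  · rw [max_eq_right (by linarith), ramp_of_half_le_of_le_one hJ₃.2.1 (by linarith),
      ramp_of_half_le_of_le_one (by linarith) hJ₃.2.2]
    ring
  · rw [max_eq_left hJ₄.2.2, ramp_of_half_le_of_le_one (by linarith) hJ₄.1,
      ramp_of_one_le hJ₄.2.1, sub_zero]
  · rw [max_eq_right hJ₅.2.2, ramp_of_half_le_of_le_one (by linarith) hJ₅.1,
      ramp_of_one_le hJ₅.2.1, sub_zero]
  · have houtside : x 0 + x 1 ≤ 1 / 2 ∨ 1 ≤ max (x 0) (x 1) := by grind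
    have hle : max (x 0) (x 1) ≤ x 0 + x 1 := max_le (by linarith) (by linarith)
    rcases houtside with hsmall | hlarge
    · rw [ramp_of_le_half (hle.trans hsmall), ramp_of_le_half hsmall, sub_self]
    · rw [ramp_of_one_le hlarge, ramp_of_one_le (hlarge.trans hle), sub_self]

/-- The quincunx matrix `A`, a rotation by 45 degrees composed with dilation by `√2`. -/
def quincunxMatrix : Matrix (Fin 2) (Fin 2) ℝ := !![1, -1; 1, 1]

lemma transpose_quincunxMatrix_mulVec (v : Fin 2 → ℝ) :
    quincunxMatrixᵀ *ᵥ v = ![v 0 + v 1, -v 0 + v 1] := by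
  ext i
  fin_cases i <;> simp [quincunxMatrix, mulVec, dotProduct, Fin.sum_univ_two]

lemma quincunxMatrix_mul_transpose : quincunxMatrix * quincunxMatrixᵀ = (2 : ℝ) • 1 := by
  ext i j
  fin_cases i <;> fin_cases j <;> norm_num [quincunxMatrix, mul_apply, Fin.sum_univ_two]

lemma norm_fin_two {E : Type*} [SeminormedAddGroup E] (v : Fin 2 → E) : ‖v‖ = max ‖v 0‖ ‖v 1‖ := by
  simp [Pi.norm_def, Fin.univ_succ]

lemma max_abs_add_abs_neg_add {R : Type*} [AddCommGroup R] [LinearOrder R] [IsOrderedAddMonoid R]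
    (a b : R) : max |a + b| |-a + b| = |a| + |b| := by
  grind

lemma norm_transpose_quincunxMatrix_mulVec (v : Fin 2 → ℝ) :
    ‖quincunxMatrixᵀ *ᵥ v‖ = |v 0| + |v 1| := by
  rw [transpose_quincunxMatrix_mulVec, norm_fin_two]
  exact max_abs_add_abs_neg_add (v 0) (v 1)

lemma quincunxPsiHat_eq_ramp_norm_sub (v : Fin 2 → ℝ) :
    quincunxPsiHat v = ramp ‖v‖ - ramp ‖quincunxMatrixᵀ *ᵥ v‖ := by
  rw [norm_transpose_quincunxMatrix_mulVec, norm_fin_two]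
  exact tentG_eq_ramp_sub_ramp (abs_nonneg (v 0)) (abs_nonneg (v 1))

theorem quincunx_partition_of_unity_general
    (A : Matrix (Fin 2) (Fin 2) ℝ) (hA : A = !![1, -1; 1, 1]) {ξ : ℝn 2} (hξ : ξ ≠ 0) :
    HasSum (fun j : ℤ => quincunxPsiHat ((Aᵀ ^ j).mulVec ξ)) 1 := by
  obtain rfl : A = quincunxMatrix := hA
  have hsim : quincunxMatrixᵀᵀ * quincunxMatrixᵀ = (2 : ℝ) • 1 := by
    rw [transpose_transpose, quincunxMatrix_mul_transpose]
  simpa only [quincunxPsiHat_eq_ramp_norm_sub, sub_zero] using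
    hasSum_sub_mulVec_zpow_mulVec hsim one_lt_two eventually_ramp_norm_eq_one
      eventually_ramp_norm_eq_zero hξ

open Matrix in
/-- Example 2.6: `ψ̂` is a `B`-dilative partition of unity for the
transpose `B` of the quincunx matrix. -/
theorem quincunx_partition_of_unity
    (A : Matrix (Fin 2) (Fin 2) ℝ) (hA : A = !![1, -1; 1, 1]) :
    ∀ᵐ ξ : ℝn 2, HasSum (fun j : ℤ => quincunxPsiHat ((Aᵀ ^ j).mulVec ξ)) 1 := by
  filter_upwards [Measure.ae_ne volume 0] with ξ hξ
  exact quincunx_partition_of_unity_general A hA hξ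

end
end
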